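/- arXiv:0910.0237 — 2 statements merged into one kernel-verified Lean document; each statement's English description precedes it below -/
import Mathlib

section
/- If (Y,f) is a transitive finitely presented system, then there exist a subshift of finite type (Σ,σ), a Smale space (X,F), an s-resolving factor map α : Σ → X, and a u-resolving factor map β : X → Y. -/
/-!
Code `Y` by the paths of a finite graph whose letters know the points they present up to a small
error. Selecting lexicographically minimal paths, and recording in each letter where the smaller
close paths are, one may assume that there are no diamonds: distinct close paths never have both
the same distant past and the same distant future. Then mark the letter of a path at each time by
the letters that occur there on close paths with the same distant past, a finite picture of the
local unstable leaf. A path may have several consistent markings; two marked paths are identified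
when, at every time, their letters are close and their marks agree near them. Being identified on a
long finite window, up to an intermediate letter, forces identification at its centre, which gives
the quotient `X` a metric in which the shift is expansive.

Close marked paths have the same leaf pictures, so the letter of one continues a past path close to
the other; this is the bracket of `X`. Forgetting the marks maps `X` to `Y`, injectively on
unstable sets because the marks of paths over one point of `Y` agree as soon as they agree in the
distant past. The map from marked paths to `X` is injective on stable sets because identified paths
with a common future would form a diamond.
-/

open Filter Topology Set

/-- `f` is expansive with expansive constant `c`. -/
def Expansive {X : Type*} [MetricSpace X] (f : Equiv.Perm X) (c : ℝ) : Prop :=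
  ∀ p q : X, p ≠ q → ∃ n : ℤ, c < dist ((f ^ n) p) ((f ^ n) q)

/-- The ε-stable set of `x`. -/
def Ws {X : Type*} [MetricSpace X] (f : Equiv.Perm X) (ε : ℝ) (x : X) : Set X :=
  {y | ∀ n : ℕ, dist ((f ^ (n : ℤ)) x) ((f ^ (n : ℤ)) y) < ε}

/-- The ε-unstable set of `x`. -/
def Wu {X : Type*} [MetricSpace X] (f : Equiv.Perm X) (ε : ℝ) (x : X) : Set X :=
  {y | ∀ n : ℕ, dist ((f ^ (-(n : ℤ))) x) ((f ^ (-(n : ℤ))) y) < ε}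

/-- The stable set of `x`. -/
def stableSet {X : Type*} [MetricSpace X] (f : Equiv.Perm X) (x : X) : Set X :=
  {y | Filter.Tendsto (fun n : ℕ => dist ((f ^ (n : ℤ)) x) ((f ^ (n : ℤ)) y))
    Filter.atTop (nhds 0)}

/-- The unstable set of `x`. -/
def unstableSet {X : Type*} [MetricSpace X] (f : Equiv.Perm X) (x : X) : Set X :=
  {y | Filter.Tendsto (fun n : ℕ => dist ((f ^ (-(n : ℤ))) x) ((f ^ (-(n : ℤ))) y))
    Filter.atTop (nhds 0)}

/-- Canonical coordinates: for all sufficiently small ε > 0 there is δ > 0 such that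
points at distance < δ have a unique bracket `[x,y] = W^s_ε(x) ∩ W^u_ε(y)`. -/
def CanonicalCoords {X : Type*} [MetricSpace X] (f : Equiv.Perm X) : Prop :=
  ∃ ε₀ > 0, ∀ ε : ℝ, 0 < ε → ε ≤ ε₀ → ∃ δ > 0, ∀ x y : X, dist x y < δ →
    ∃! z, z ∈ Ws f ε x ∩ Wu f ε y

/-- A Smale space: an expansive homeomorphism with canonical coordinates. -/
def IsSmale {X : Type*} [MetricSpace X] (f : Equiv.Perm X) : Prop :=
  Continuous (⇑f) ∧ Continuous (⇑f.symm) ∧ (∃ c > 0, Expansive f c) ∧ CanonicalCoords f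

/-- Topological transitivity. -/
def TopTransitive {X : Type*} [MetricSpace X] (f : Equiv.Perm X) : Prop :=
  ∀ U V : Set X, IsOpen U → IsOpen V → U.Nonempty → V.Nonempty →
    ∃ n : ℕ, ((f ^ (n : ℤ)) ⁻¹' U ∩ V).Nonempty

/-- A periodic point of `f`. -/
def IsPeriodicPoint {X : Type*} [MetricSpace X] (f : Equiv.Perm X) (p : X) : Prop :=
  ∃ N : ℕ, 0 < N ∧ (f ^ (N : ℤ)) p = p

/-- A factor map (surjective continuous semiconjugacy). -/
def IsFactorMap {X Y : Type*} [MetricSpace X] [MetricSpace Y]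
    (F : Equiv.Perm X) (f : Equiv.Perm Y) (π : X → Y) : Prop :=
  Continuous π ∧ Function.Surjective π ∧ ∀ x, π (F x) = f (π x)

/-- A map is u-resolving if it is injective on unstable sets. -/
def UResolving {X Y : Type*} [MetricSpace X] (F : Equiv.Perm X) (π : X → Y) : Prop :=
  ∀ x : X, Set.InjOn π (unstableSet F x)

/-- A map is s-resolving if it is injective on stable sets. -/
def SResolving {X Y : Type*} [MetricSpace X] (F : Equiv.Perm X) (π : X → Y) : Prop :=
  ∀ x : X, Set.InjOn π (stableSet F x)

/-- The shift map on bi-infinite sequences. -/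
def shiftE (A : Type*) : Equiv.Perm (ℤ → A) where
  toFun x i := x (i + 1)
  invFun x i := x (i - 1)
  left_inv x := funext fun i => congrArg x (by ring)
  right_inv x := funext fun i => congrArg x (by ring)

/-- The word `w` occurs in the sequence `x`. -/
def OccursIn {A : Type*} {k : ℕ} (w : Fin k → A) (x : ℤ → A) : Prop :=
  ∃ i : ℤ, ∀ j : Fin k, x (i + (j : ℤ)) = w j

/-- A subshift of finite type: the sequences avoiding a finite set of forbidden words. -/
def IsSFT {A : Type*} (S : Set (ℤ → A)) : Prop :=
  ∃ Fw : Set ((k : ℕ) × (Fin k → A)), Fw.Finite ∧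
    S = {x | ∀ w ∈ Fw, ¬ OccursIn w.2 x}

/-- A one-step SFT (vertex shift) with transition rule `T`. -/
def IsOneStepSFTFor {A : Type*} (T : A → A → Prop) (S : Set (ℤ → A)) : Prop :=
  S = {x | ∀ i : ℤ, T (x i) (x (i + 1))}

/-- `S` is invariant under the shift and its inverse. -/
def ShiftInvariant {A : Type*} (S : Set (ℤ → A)) : Prop :=
  (∀ x ∈ S, shiftE A x ∈ S) ∧ (∀ x ∈ S, (shiftE A).symm x ∈ S)

/-- A factor map from the subshift `(S, σ)` onto the system `(Y, f)`. -/
def IsSubshiftFactorMap {A Y : Type*} [TopologicalSpace A] [MetricSpace Y]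
    (S : Set (ℤ → A)) (f : Equiv.Perm Y) (φ : (ℤ → A) → Y) : Prop :=
  ContinuousOn φ S ∧ φ '' S = Set.univ ∧ ∀ x ∈ S, φ (shiftE A x) = f (φ x)

/-- Topological transitivity of the shift restricted to `S`. -/
def SubshiftTransitive {A : Type*} [TopologicalSpace A] (S : Set (ℤ → A)) : Prop :=
  ∀ U V : Set (ℤ → A), IsOpen U → IsOpen V → (U ∩ S).Nonempty → (V ∩ S).Nonempty →
    ∃ n : ℕ, (((shiftE A) ^ (n : ℤ)) ⁻¹' U ∩ V ∩ S).Nonempty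

/-- The stable set of `t` in the subshift `S`: points eventually agreeing with `t`. -/
def shiftStable {A : Type*} (S : Set (ℤ → A)) (t : ℤ → A) : Set (ℤ → A) :=
  {t' ∈ S | ∃ N : ℤ, ∀ i ≥ N, t' i = t i}

/-- A finitely presented system: an expansive system that is a factor of an SFT. -/
def FinitelyPresented {Y : Type*} [MetricSpace Y] (f : Equiv.Perm Y) : Prop :=
  Continuous (⇑f) ∧ Continuous (⇑f.symm) ∧ (∃ c > 0, Expansive f c) ∧
  ∃ (N : ℕ) (S : Set (ℤ → Fin N)), IsSFT S ∧ ShiftInvariant S ∧ S.Nonempty ∧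
    ∃ φ : (ℤ → Fin N) → Y, IsSubshiftFactorMap S f φ

namespace SmaleCover

section Paths

variable {A : Type*} {T : A → A → Prop} {p q t : ℤ → A} {i j m : ℤ}

/-- A bi-infinite path in the directed graph with edge relation `T`. -/
def IsPath (T : A → A → Prop) (t : ℤ → A) : Prop :=
  ∀ i, T (t i) (t (i + 1))

/-- A left-infinite path ending at time `i`; the values of `p` after time `i` are irrelevant. -/
def IsPastPath (T : A → A → Prop) (p : ℤ → A) (i : ℤ) : Prop :=
  ∀ j < i, T (p j) (p (j + 1))

/-- The sequence that follows `p` up to time `m` and `q` afterwards. -/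
def splice (m : ℤ) (p q : ℤ → A) (j : ℤ) : A :=
  if j ≤ m then p j else q j

theorem splice_of_le (h : j ≤ m) : splice m p q j = p j :=
  if_pos h

theorem splice_of_lt (h : m < j) : splice m p q j = q j :=
  if_neg h.not_ge

theorem splice_of_ge (hpq : p m = q m) (h : m ≤ j) : splice m p q j = q j := by
  rcases h.eq_or_lt with rfl | h
  · rw [splice_of_le le_rfl, hpq]
  · exact splice_of_lt h

theorem IsPath.isPastPath (ht : IsPath T t) (i : ℤ) : IsPastPath T t i :=
  fun j _ => ht j

theorem IsPastPath.mono (hp : IsPastPath T p i) (h : j ≤ i) : IsPastPath T p j :=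
  fun k hk => hp k (hk.trans_le h)

theorem isPastPath_splice (hp : IsPastPath T p m) (hpq : m < i → T (p m) (q (m + 1)))
    (hq : ∀ j, m < j → j < i → T (q j) (q (j + 1))) : IsPastPath T (splice m p q) i := by
  intro j hj
  rcases lt_trichotomy j m with h | rfl | h
  · rw [splice_of_le h.le, splice_of_le (by lia)]
    exact hp j h
  · rw [splice_of_le le_rfl, splice_of_lt (by lia)]
    exact hpq hj
  · rw [splice_of_lt h, splice_of_lt (by lia)]
    exact hq j h hj

theorem IsPastPath.glue (hp : IsPastPath T p m) (hq : IsPastPath T q i) (hpq : p m = q m) :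
    IsPastPath T (splice m p q) i :=
  isPastPath_splice hp (fun h => hpq ▸ hq m h) fun j _ hj => hq j hj

theorem IsPastPath.glue_isPath (hp : IsPastPath T p m) (hq : IsPath T q) (hpq : p m = q m) :
    IsPath T (splice m p q) :=
  fun j => hp.glue (hq.isPastPath (j + 1)) hpq j (lt_add_one j)

theorem IsPastPath.shift {c : ℤ} (hp : IsPastPath T p (i + c)) :
    IsPastPath T (fun k => p (k + c)) i := fun j hj => by
  simpa only [add_right_comm] using hp (j + c) (by lia)

theorem exists_isPastPath_mem {D : ℤ → Set A} {b : A}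
    (h : ∀ j < i, ∀ b' ∈ D (j + 1), ∃ b ∈ D j, T b b') (hb : b ∈ D i) :
    ∃ p, IsPastPath T p i ∧ (∀ j ≤ i, p j ∈ D j) ∧ p i = b := by
  choose! g hgD hgT using h
  let G : ℕ → A := fun n => n.rec b fun n => g (i - n - 1)
  have hG : ∀ n : ℕ, G n ∈ D (i - n) := fun n => by
    induction n with
    | zero => simpa [G] using hb
    | succ n ih =>
      rw [show i - (n + 1 : ℕ) = i - n - 1 by lia]
      exact hgD _ (by lia) _ (by rwa [sub_add_cancel])
  refine ⟨fun j => G (i - j).toNat, fun j hj => ?_, fun j hj => ?_, by simp [G]⟩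
  · obtain ⟨n, rfl⟩ : ∃ n : ℕ, j = i - n - 1 := ⟨(i - j - 1).toNat, by lia⟩
    beta_reduce
    rw [sub_add_cancel, show (i - (i - n - 1)).toNat = n + 1 by lia,
      show (i - (i - n)).toNat = n by lia]
    exact hgT (i - n - 1) (by lia) _ (by simpa using hG n)
  · have h := hG (i - j).toNat
    rwa [show i - ((i - j).toNat : ℤ) = j by lia] at h

end Paths

section Ultralimits

variable {A ι κ : Type*} {T : A → A → Prop}

theorem exists_ultralimit [Finite A] (U : Ultrafilter κ) (x : κ → ι → A) :
    ∃ y : ι → A, ∀ i, ∀ᶠ n in U, x n i = y i := by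
  have h : ∀ i, ∃ a, ∀ᶠ n in U, x n i = a := fun i =>
    Ultrafilter.eventually_exists_iff.1 (Eventually.of_forall fun n => ⟨x n i, rfl⟩)
  choose y hy using h
  exact ⟨y, hy⟩

theorem isPath_of_eventually_eq {l : Filter κ} [NeBot l] {x : κ → ℤ → A} {y : ℤ → A}
    (hx : ∀ i, ∀ᶠ n in l, T (x n i) (x n (i + 1))) (hy : ∀ i, ∀ᶠ n in l, x n i = y i) :
    IsPath T y := fun i => by
  obtain ⟨n, hT, hi, hi'⟩ := ((hx i).and ((hy i).and (hy (i + 1)))).exists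
  rwa [← hi, ← hi']

end Ultralimits

section Presentations

variable {A B Y : Type*} [PseudoMetricSpace A] [PseudoMetricSpace B] [MetricSpace Y]
  {f : Equiv.Perm Y} {T : A → A → Prop} {φ : (ℤ → A) → Y} {t t' : ℤ → A} {M : ℕ}

/-- A symbolic presentation `φ` of `f` by the bi-infinite paths of `T`. The pseudo-metric on the
alphabet measures how far apart the points presented by two letters are: paths of the same point
are `1`-close, and `φ` is uniformly continuous up to errors of size `9` in each coordinate. -/
structure IsPresentation (f : Equiv.Perm Y) (T : A → A → Prop) (φ : (ℤ → A) → Y) : Prop where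
  surj : ∀ y, ∃ t, IsPath T t ∧ φ t = y
  semiconj : ∀ {t}, IsPath T t → φ (shiftE A t) = f (φ t)
  dist_le_one : ∀ {t t'}, IsPath T t → IsPath T t' → φ t = φ t' → ∀ i, dist (t i) (t' i) ≤ 1
  continuity : ∀ ε > 0, ∃ n : ℕ, ∀ t t', IsPath T t → IsPath T t' →
    (∀ i : ℤ, i.natAbs ≤ n → dist (t i) (t' i) ≤ 9) → dist (φ t) (φ t') < ε

/-- Paths that are `9`-close at all times are `1`-close at all times. -/
def IsTight (T : A → A → Prop) : Prop :=
  ∀ t t', IsPath T t → IsPath T t' → (∀ i, dist (t i) (t' i) ≤ 9) → ∀ i, dist (t i) (t' i) ≤ 1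

/-- Past paths that are `9`-close are `1`-close once `M` final letters are ignored. -/
def ContractingPast (T : A → A → Prop) (M : ℕ) : Prop :=
  ∀ (i : ℤ) (p q : ℤ → A), IsPastPath T p i → IsPastPath T q i →
    (∀ j ≤ i, dist (p j) (q j) ≤ 9) → ∀ j ≤ i - M, dist (p j) (q j) ≤ 1

theorem IsPresentation.eq_of_dist_le (h : IsPresentation f T φ) (ht : IsPath T t)
    (ht' : IsPath T t') (hd : ∀ i, dist (t i) (t' i) ≤ 9) : φ t = φ t' :=
  eq_of_forall_dist_le fun ε hε =>
    have ⟨_, hn⟩ := h.continuity ε hε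
    (hn t t' ht ht' fun i _ => hd i).le

theorem IsPresentation.isTight (h : IsPresentation f T φ) : IsTight T :=
  fun _ _ ht ht' hd => h.dist_le_one ht ht' (h.eq_of_dist_le ht ht' hd)

theorem ContractingPast.isTight (h : ContractingPast T M) : IsTight T :=
  fun t t' ht ht' hd i => h (i + M) t t' (ht.isPastPath _) (ht'.isPastPath _)
    (fun j _ => hd j) i (by lia)

theorem IsTight.exists_contractingPast [Finite A] (h : IsTight T) :
    ∃ M, ContractingPast T M := by
  by_contra! hcon
  simp only [ContractingPast] at hcon
  push Not at hcon
  choose i p q hp hq hpq j hj hlt using hcon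
  let U := Ultrafilter.of (atTop : Filter ℕ)
  have hU : ∀ k : ℤ, ∀ᶠ n in U, k + j n < i n := fun k => by
    have hk : ∀ᶠ n : ℕ in U, k.natAbs < n :=
      Ultrafilter.of_le atTop (eventually_gt_atTop k.natAbs)
    filter_upwards [hk] with n hn
    have := hj n
    lia
  obtain ⟨x, hx⟩ := exists_ultralimit U fun n k => p n (k + j n)
  obtain ⟨y, hy⟩ := exists_ultralimit U fun n k => q n (k + j n)
  have hxP : IsPath T x := isPath_of_eventually_eq
    (fun k => (hU k).mono fun n hn => by simpa only [add_right_comm] using hp n _ hn) hx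
  have hyP : IsPath T y := isPath_of_eventually_eq
    (fun k => (hU k).mono fun n hn => by simpa only [add_right_comm] using hq n _ hn) hy
  have hxy : ∀ k, dist (x k) (y k) ≤ 9 := fun k => by
    obtain ⟨n, hn, hxn, hyn⟩ := ((hU k).and ((hx k).and (hy k))).exists
    exact hxn ▸ hyn ▸ hpq n _ hn.le
  obtain ⟨n, hxn, hyn⟩ := ((hx 0).and (hy 0)).exists
  have h0 := h x y hxP hyP hxy 0
  rw [← hxn, ← hyn, zero_add] at h0
  exact (hlt n).not_ge h0

theorem IsPresentation.lift {T' : B → B → Prop} (h : IsPresentation f T φ) (g : B → A)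
    (hg : ∀ {u v}, T' u v → T (g u) (g v)) (hd : ∀ u v, dist (g u) (g v) ≤ dist u v)
    (hsurj : ∀ t, IsPath T t → ∃ s, IsPath T' s ∧ φ (g ∘ s) = φ t)
    (hone : ∀ s s', IsPath T' s → IsPath T' s' → (∀ i, dist (g (s i)) (g (s' i)) ≤ 1) →
      ∀ i, dist (s i) (s' i) ≤ 1) :
    IsPresentation f T' fun s => φ (g ∘ s) where
  surj y := by
    obtain ⟨t, ht, rfl⟩ := h.surj y
    exact hsurj t ht
  semiconj hs := h.semiconj fun i => hg (hs i)
  dist_le_one hs hs' he := hone _ _ hs hs' <|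
    h.dist_le_one (fun i => hg (hs i)) (fun i => hg (hs' i)) he
  continuity ε hε := by
    obtain ⟨n, hn⟩ := h.continuity ε hε
    exact ⟨n, fun s s' hs hs' hss => hn _ _ (fun i => hg (hs i)) (fun i => hg (hs' i))
      fun i hi => (hd _ _).trans (hss i hi)⟩

end Presentations

section Marked

variable {A : Type*}

/-- A letter together with a set of letters, the ends of other paths to be compared with the current
one. Distances ignore the mark. -/
@[ext]
structure Marked (A : Type*) where
  pt : A
  mark : Set A

instance [Finite A] : Finite (Marked A) :=
  Finite.of_injective (fun u => (u.pt, u.mark)) fun _ _ h =>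
    Marked.ext (congrArg Prod.fst h) (congrArg Prod.snd h)

instance [PseudoMetricSpace A] : PseudoMetricSpace (Marked A) :=
  .induced Marked.pt inferInstance

end Marked

section Diamonds

variable {A Y : Type*} [PseudoMetricSpace A] [MetricSpace Y] {f : Equiv.Perm Y}
  {T : A → A → Prop} {φ : (ℤ → A) → Y} {s t : ℤ → A}

/-- Distinct paths with the same distant past and the same distant future do not stay `9`-close. -/
def NoDiamond (T : A → A → Prop) : Prop :=
  ∀ s t, IsPath T s → IsPath T t → (∀ᶠ j in atBot, s j = t j) → (∀ᶠ j in atTop, s j = t j) →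
    (∀ i, dist (s i) (t i) ≤ 9) → s = t

/-- `p` is a path to time `i` that is `1`-close to `s`, and lexicographically smaller after
agreeing with it in the past. -/
structure Undercuts [LT A] (T : A → A → Prop) (p s : ℤ → A) (i : ℤ) : Prop where
  isPastPath : IsPastPath T p i
  dist_le : ∀ j ≤ i, dist (p j) (s j) ≤ 1
  exists_lt : ∃ m < i, (∀ j ≤ m, p j = s j) ∧ p (m + 1) < s (m + 1)

/-- Transitions between letters marked by the endpoints of the paths that undercut the current
one. A path of marked letters is never rejoined by a path undercutting it. -/
structure RivalStep [LT A] (T : A → A → Prop) (u v : Marked A) : Prop where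
  step : T u.pt v.pt
  pt_notMem : u.pt ∉ u.mark
  mark_eq : v.mark = {b' | dist b' v.pt ≤ 1 ∧ ∃ b, T b b' ∧ (b ∈ u.mark ∨ b = u.pt ∧ b' < v.pt)}

theorem IsTight.not_lt_of_isPath_rivalStep [LT A] (h : IsTight T) {t t' : ℤ → Marked A}
    (ht : IsPath (RivalStep T) t) (ht' : IsPath (RivalStep T) t')
    (hfut : ∀ᶠ j in atTop, t j = t' j) (hd : ∀ i, dist (t i) (t' i) ≤ 9) {i : ℤ}
    (hi : (t i).pt = (t' i).pt) : ¬ (t (i + 1)).pt < (t' (i + 1)).pt := by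
  intro hlt
  have hone : ∀ j, dist (t j).pt (t' j).pt ≤ 1 :=
    h _ _ (fun j => (ht j).step) (fun j => (ht' j).step) hd
  have hmem : ∀ j, i + 1 ≤ j → (t j).pt ∈ (t' j).mark := by
    refine Int.leInduction ?_ fun j _ ih => ?_
    · rw [(ht' i).mark_eq]
      exact ⟨hone _, (t' i).pt, hi ▸ (ht i).step, Or.inr ⟨rfl, hlt⟩⟩
    · rw [(ht' j).mark_eq]
      exact ⟨hone _, _, (ht j).step, Or.inl ih⟩
  obtain ⟨j, hj, hij⟩ := (hfut.and (eventually_ge_atTop (i + 1))).exists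
  exact (ht' j).pt_notMem (hj ▸ hmem j hij)

theorem IsTight.noDiamond_rivalStep [LinearOrder A] (h : IsTight T) :
    NoDiamond (RivalStep T) := by
  intro t t' ht ht' hpast hfut hd
  obtain ⟨m, hm⟩ := eventually_atBot.1 hpast
  have hge : ∀ j, m ≤ j → t j = t' j := by
    refine Int.leInduction (hm m le_rfl) fun j _ ih => ?_
    have hpt : (t (j + 1)).pt = (t' (j + 1)).pt := le_antisymm
      (not_lt.1 <| h.not_lt_of_isPath_rivalStep ht' ht (hfut.mono fun _ => Eq.symm)
        (fun i => dist_comm (t i) (t' i) ▸ hd i) (by rw [ih]))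
      (not_lt.1 <| h.not_lt_of_isPath_rivalStep ht ht' hfut hd (by rw [ih]))
    exact Marked.ext hpt (by rw [(ht j).mark_eq, (ht' j).mark_eq, ih, hpt])
  exact funext fun j => (le_total j m).elim (hm j) (hge j)

/-- The paths that are `1`-close to `t` and differ from it only at times of absolute value less
than `n`. -/
def perturbations (T : A → A → Prop) (t : ℤ → A) (n : ℕ) : Set (ℤ → A) :=
  {w | IsPath T w ∧ (∀ j : ℤ, n ≤ j.natAbs → w j = t j) ∧ ∀ j, dist (w j) (t j) ≤ 1}

theorem finite_perturbations [Finite A] (n : ℕ) : (perturbations T t n).Finite := by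
  refine Set.Finite.of_injOn (f := fun w (j : Icc (-n : ℤ) n) => w j) (t := univ)
    (fun _ _ => mem_univ _) ?_ finite_univ
  intro w hw w' hw' he
  funext j
  by_cases hj : n ≤ j.natAbs
  · rw [hw.2.1 j hj, hw'.2.1 j hj]
  · exact congrFun he ⟨j, by constructor <;> lia⟩

theorem IsTight.ne_of_undercuts [LinearOrder A] (h : IsTight T) (ht : IsPath T t) {n : ℕ}
    {w p : ℤ → A} {i : ℤ} (hw : MinimalFor (· ∈ perturbations T t n) toLex w)
    (hp : Undercuts T p w i) (hpast : ∀ j : ℤ, j ≤ -n → p j = w j) (hi : i ≤ n) :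
    p i ≠ w i := by
  intro hpi
  obtain ⟨⟨hwP, hwt, hwt1⟩, hmin⟩ := hw
  obtain ⟨m, hmi, heq, hlt⟩ := hp.exists_lt
  have hqP : IsPath T (splice i p w) := hp.isPastPath.glue_isPath hwP hpi
  have hqw : ∀ j, dist (splice i p w j) (w j) ≤ 1 := fun j => by
    rcases le_or_gt j i with hj | hj
    · rw [splice_of_le hj]
      exact hp.dist_le j hj
    · simp [splice_of_lt hj]
  have hqt : ∀ j, dist (splice i p w j) (t j) ≤ 1 := h _ t hqP ht fun j => by
    linarith [dist_triangle (splice i p w j) (w j) (t j), hqw j, hwt1 j]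
  have hqn : ∀ j : ℤ, n ≤ j.natAbs → splice i p w j = t j := fun j hj => by
    rw [← hwt j hj]
    rcases lt_or_ge j i with hji | hji
    · rw [splice_of_le hji.le, hpast j (by lia)]
    · exact splice_of_ge hpi hji
  have hqlt : toLex (splice i p w) < toLex w := by
    refine ⟨m + 1, fun j hj => ?_, ?_⟩
    · exact (splice_of_le (by lia)).trans (heq j (by lia))
    · exact (splice_of_le hmi).trans_lt hlt
  exact hqlt.not_ge (hmin ⟨hqP, hqn, hqt⟩ hqlt.le)

theorem IsTight.exists_forall_undercuts_ne [Finite A] [LinearOrder A] (h : IsTight T)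
    (ht : IsPath T t) :
    ∃ s, IsPath T s ∧ (∀ i, dist (s i) (t i) ≤ 1) ∧ ∀ p i, Undercuts T p s i → p i ≠ s i := by
  choose w hw using fun n => (finite_perturbations (T := T) (t := t) n).exists_minimalFor
    toLex _ ⟨t, ht, fun _ _ => rfl, fun j => by simp⟩
  let U := Ultrafilter.of (atTop : Filter ℕ)
  obtain ⟨s, hs⟩ := exists_ultralimit U w
  refine ⟨s, isPath_of_eventually_eq (fun i => .of_forall fun n => (hw n).1.1 i) hs,
    fun i => ?_, ?_⟩
  · obtain ⟨n, hn⟩ := (hs i).exists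
    exact hn ▸ (hw n).1.2.2 i
  rintro p i ⟨hp, hps, m, hmi, hpast, hlt⟩ hpi
  obtain ⟨n, hwn, hn⟩ : ∃ n, (∀ j ∈ Icc m i, w n j = s j) ∧ m.natAbs + i.natAbs < n :=
    (((eventually_all_finite (finite_Icc m i)).2 fun j _ => hs j).and
      (Ultrafilter.of_le atTop (eventually_gt_atTop _))).exists
  have hwp : w n m = p m := by rw [hwn m ⟨le_rfl, hmi.le⟩, hpast m le_rfl]
  have hunder : Undercuts T (splice m (w n) p) (w n) i := by
    refine ⟨((hw n).1.1.isPastPath m).glue hp hwp, fun j hj => ?_,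
      m, hmi, fun j hj => splice_of_le hj, ?_⟩
    · rcases le_total j m with hjm | hjm
      · simp [splice_of_le hjm]
      · rw [splice_of_ge hwp hjm, hwn j ⟨hjm, hj⟩]
        exact hps j hj
    · rwa [splice_of_lt (lt_add_one m), hwn _ ⟨by lia, by lia⟩]
  refine h.ne_of_undercuts ht (hw n) hunder (fun j hj => splice_of_le (by lia)) (by lia) ?_
  rw [splice_of_lt hmi, hpi, hwn i ⟨hmi.le, le_rfl⟩]

theorem IsPath.exists_undercuts_succ_iff [LT A] (hs : IsPath T s) {i : ℤ} {b' : A} :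
    (∃ p, Undercuts T p s (i + 1) ∧ p (i + 1) = b') ↔
      dist b' (s (i + 1)) ≤ 1 ∧ ∃ b, T b b' ∧
        ((∃ p, Undercuts T p s i ∧ p i = b) ∨ b = s i ∧ b' < s (i + 1)) := by
  constructor
  · rintro ⟨p, ⟨hp, hd, m, hmi, hpast, hlt⟩, rfl⟩
    refine ⟨hd _ le_rfl, p i, hp i (lt_add_one i), ?_⟩
    rcases (Int.lt_add_one_iff.1 hmi).lt_or_eq with h | rfl
    · exact Or.inl ⟨p, ⟨hp.mono (by lia), fun j hj => hd j (by lia), m, h, hpast, hlt⟩, rfl⟩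
    · exact Or.inr ⟨hpast m le_rfl, hlt⟩
  have append : ∀ {p : ℤ → A}, IsPastPath T p i → (∀ j ≤ i, dist (p j) (s j) ≤ 1) →
      dist b' (s (i + 1)) ≤ 1 → T (p i) b' →
      (∃ m < i + 1, (∀ j ≤ m, splice i p (fun _ => b') j = s j) ∧
        splice i p (fun _ => b') (m + 1) < s (m + 1)) →
      ∃ p, Undercuts T p s (i + 1) ∧ p (i + 1) = b' := by
    intro p hp hd hb hT hlt
    refine ⟨_, ⟨isPastPath_splice hp (fun _ => hT) fun j _ _ => by lia, fun j hj => ?_, hlt⟩,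
      splice_of_lt (lt_add_one i)⟩
    rcases le_or_gt j i with h | h
    · rw [splice_of_le h]
      exact hd j h
    · obtain rfl : j = i + 1 := by lia
      rwa [splice_of_lt h]
  rintro ⟨hb, b, hT, ⟨p, ⟨hp, hd, m, hmi, hpast, hlt⟩, rfl⟩ | ⟨rfl, hlt⟩⟩
  · refine append hp hd hb hT ⟨m, by lia, fun j hj => ?_, ?_⟩
    · rw [splice_of_le (by lia), hpast j hj]
    · rwa [splice_of_le (by lia)]
  · exact append (hs.isPastPath i) (by simp) hb hT
      ⟨i, by lia, fun j hj => splice_of_le hj, by rwa [splice_of_lt (lt_add_one i)]⟩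

theorem isPath_rivalStep [LT A] (hs : IsPath T s)
    (hne : ∀ p i, Undercuts T p s i → p i ≠ s i) :
    IsPath (RivalStep T) fun i => ⟨s i, {b | ∃ p, Undercuts T p s i ∧ p i = b}⟩ :=
  fun i => ⟨hs i, fun ⟨p, hp, hpi⟩ => hne p i hp hpi,
    Set.ext fun _ => hs.exists_undercuts_succ_iff⟩

theorem IsPresentation.rivalStep [Finite A] [LinearOrder A] (h : IsPresentation f T φ) :
    IsPresentation f (RivalStep T) fun s => φ (Marked.pt ∘ s) :=
  h.lift Marked.pt RivalStep.step (fun _ _ => le_rfl)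
    (fun t ht => by
      obtain ⟨s, hs, hst, hne⟩ := h.isTight.exists_forall_undercuts_ne ht
      exact ⟨_, isPath_rivalStep hs hne,
        h.eq_of_dist_le hs ht fun i => (hst i).trans (by norm_num)⟩)
    fun _ _ _ _ hd => hd

end Diamonds

section Blocks

variable {A : Type*} {k : ℕ} {i : ℤ}

/-- `v` extends `u` by one letter. Words carry their newest letter at index `0`, so that a path of
overlapping words satisfies `p i j = p (i - j) 0`. -/
def Overlap (u v : Fin (k + 1) → A) : Prop :=
  ∀ j : Fin k, v j.succ = u j.castSucc

theorem overlap_apply {p : ℤ → Fin (k + 1) → A} (hp : IsPastPath Overlap p i)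
    (j : Fin (k + 1)) {l : ℤ} (hl : l ≤ i) : p l j = p (l - (j : ℕ)) 0 := by
  induction j using Fin.induction generalizing l with
  | zero => simp
  | succ j ih =>
    have h := hp (l - 1) (by lia) j
    rw [sub_add_cancel] at h
    rw [h, ih (by lia)]
    congr 1
    simp only [Fin.val_castSucc, Fin.val_succ]
    lia

theorem overlap_slide (t : ℤ → A) (i : ℤ) :
    Overlap (fun j : Fin (k + 1) => t (i - (j : ℕ))) fun j => t (i + 1 - (j : ℕ)) := fun j => by
  simp only [Fin.val_succ, Fin.val_castSucc]
  congr 1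
  lia

/-- The transitions between blocks of `M + 1` consecutive letters of a `T`-path. -/
structure BlockStep (T : A → A → Prop) (M : ℕ) (u v : Fin (M + 1) → A) : Prop where
  overlap : Overlap u v
  step : T (u 0) (v 0)

variable [PseudoMetricSpace A] {T : A → A → Prop} {M : ℕ}

theorem BlockStep.dist_apply {p q : ℤ → Fin (M + 1) → A} (hp : IsPastPath (BlockStep T M) p i)
    (hq : IsPastPath (BlockStep T M) q i) (j : Fin (M + 1)) {l : ℤ} (hl : l ≤ i) :
    dist (p l j) (q l j) = dist (p (l - (j : ℕ)) 0) (q (l - (j : ℕ)) 0) := by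
  rw [overlap_apply (fun m hm => (hp m hm).overlap) j hl,
    overlap_apply (fun m hm => (hq m hm).overlap) j hl]

theorem NoDiamond.blockStep (h : NoDiamond T) (M : ℕ) : NoDiamond (BlockStep T M) := by
  intro t t' ht ht' hpast hfut hd
  have h0 : (fun i => t i 0) = fun i => t' i 0 :=
    h _ _ (fun i => (ht i).step) (fun i => (ht' i).step) (hpast.mono fun _ hj => by rw [hj])
      (hfut.mono fun _ hj => by rw [hj]) fun i => (dist_le_pi_dist _ _ 0).trans (hd i)
  funext i j
  rw [overlap_apply (fun m _ => (ht m).overlap) j le_rfl,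
    overlap_apply (fun m _ => (ht' m).overlap) j le_rfl]
  exact congrFun h0 (i - (j : ℕ))

theorem IsPresentation.blockStep {Y : Type*} [MetricSpace Y] {f : Equiv.Perm Y}
    {φ : (ℤ → A) → Y} (h : IsPresentation f T φ) (M : ℕ) :
    IsPresentation f (BlockStep T M) fun t => φ fun i => t i 0 := by
  refine h.lift (fun u : Fin (M + 1) → A => u 0) BlockStep.step
    (fun u v => dist_le_pi_dist u v 0) (fun t ht => ?_) fun s s' hs hs' hone i =>
      (dist_pi_le_iff zero_le_one).2 fun j => ?_
  · refine ⟨fun i j => t (i - (j : ℕ)), fun i => ⟨overlap_slide t i, ?_⟩, ?_⟩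
    · simpa using ht i
    · congr 1
      funext i
      simp
  · rw [BlockStep.dist_apply (hs.isPastPath i) (hs'.isPastPath i) j le_rfl]
    exact hone _

/-- The distance between `9`-close past paths never exceeds its final value, or `1`. -/
def NonexpandingPast (T : A → A → Prop) : Prop :=
  ∀ (i : ℤ) (r : ℝ) (p q : ℤ → A), 1 ≤ r → IsPastPath T p i → IsPastPath T q i →
    (∀ j ≤ i, dist (p j) (q j) ≤ 9) → dist (p i) (q i) ≤ r → ∀ j ≤ i, dist (p j) (q j) ≤ r

theorem ContractingPast.nonexpandingPast_blockStep (h : ContractingPast T M) :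
    NonexpandingPast (BlockStep T M) := by
  intro i r p q hr hp hq hd hi
  refine Int.leInductionDown hi fun l hl ih => (dist_pi_le_iff (by linarith)).2 fun j => ?_
  rw [BlockStep.dist_apply hp hq j (by lia)]
  rcases Nat.lt_succ_iff_lt_or_eq.1 j.2 with hj | hj
  · have := (dist_le_pi_dist (p l) (q l) ⟨j + 1, by lia⟩).trans ih
    rw [BlockStep.dist_apply hp hq _ hl] at this
    convert this using 3 <;> push_cast <;> lia
  · exact (h i (fun m => p m 0) (fun m => q m 0) (fun m hm => (hp m hm).step)
      (fun m hm => (hq m hm).step) (fun m hm => (dist_le_pi_dist _ _ 0).trans (hd m hm)) _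
      (by lia)).trans hr

/-- The properties of a transition rule on which the construction of leaves rests. -/
structure IsAdapted (T : A → A → Prop) (M : ℕ) : Prop where
  noDiamond : NoDiamond T
  nonexpandingPast : NonexpandingPast T
  contractingPast : ContractingPast T M

end Blocks

theorem IsPresentation.exists_isAdapted.{u} {A : Type u} [Finite A] [PseudoMetricSpace A]
    {Y : Type*} [MetricSpace Y] {f : Equiv.Perm Y} {T : A → A → Prop} {φ : (ℤ → A) → Y}
    (h : IsPresentation f T φ) :
    ∃ (B : Type u) (_ : Finite B) (_ : PseudoMetricSpace B) (T' : B → B → Prop)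
      (φ' : (ℤ → B) → Y) (M : ℕ), IsPresentation f T' φ' ∧ IsAdapted T' M := by
  obtain ⟨n, ⟨e⟩⟩ := Finite.exists_equiv_fin A
  let : LinearOrder A := LinearOrder.lift' e e.injective
  have hR := h.rivalStep
  obtain ⟨M, hM⟩ := hR.isTight.exists_contractingPast
  have hB := hR.blockStep M
  obtain ⟨M', hM'⟩ := hB.isTight.exists_contractingPast
  exact ⟨_, inferInstance, inferInstance, _, _, M', hB, h.isTight.noDiamond_rivalStep.blockStep M,
    hM.nonexpandingPast_blockStep, hM'⟩

section Leaves

variable {A : Type*} [PseudoMetricSpace A] {T : A → A → Prop} {l l' : Filter ℤ}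
  {D D' : ℤ → Set A} {p r t t' : ℤ → A} {i j m n : ℤ} {a : A} {M : ℕ}

/-- `p` is a path to time `i` that shadows `t` and lies in `D` along the filter `l` of times. -/
structure IsLeafPath (T : A → A → Prop) (l : Filter ℤ) (D : ℤ → Set A) (t p : ℤ → A) (i : ℤ) :
    Prop where
  isPastPath : IsPastPath T p i
  dist_le : ∀ j ≤ i, dist (p j) (t j) ≤ 8
  eventually_mem : ∀ᶠ j in l, p j ∈ D j

/-- The local unstable leaf at time `i` around the path `t`: the endpoints of the shadowing paths
that emanate from `D`. -/
def leaf (T : A → A → Prop) (l : Filter ℤ) (D : ℤ → Set A) (t : ℤ → A) (i : ℤ) : Set A :=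
  {b | ∃ p, IsLeafPath T l D t p i ∧ p i = b}

/-- The leaf of the paths that agree with `t` up to time `n`. -/
def seed (T : A → A → Prop) (t : ℤ → A) (n i : ℤ) : Set A :=
  leaf T (𝓟 (Iic n)) (fun j => {t j}) t i

/-- The part near `a` of the image of a leaf under the transitions. -/
def leafImage (T : A → A → Prop) (D : Set A) (a : A) : Set A :=
  {b' | dist b' a ≤ 8 ∧ ∃ b ∈ D, T b b'}

theorem IsLeafPath.mem_leaf (hp : IsLeafPath T l D t p i) : p i ∈ leaf T l D t i :=
  ⟨p, hp, rfl⟩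

theorem IsLeafPath.mono (hp : IsLeafPath T l D t p i) (h : j ≤ i) : IsLeafPath T l D t p j :=
  ⟨hp.isPastPath.mono h, fun k hk => hp.dist_le k (hk.trans h), hp.eventually_mem⟩

theorem mem_leaf_of_glue (hl : Iic m ∈ l) (hm : p m ∈ leaf T l D t m) (hmi : m ≤ i)
    (hp : IsPastPath T p i) (hd : ∀ j, m < j → j ≤ i → dist (p j) (t j) ≤ 8) :
    p i ∈ leaf T l D t i := by
  obtain ⟨q, hq, hqp⟩ := hm
  refine ⟨splice m q p, ⟨hq.isPastPath.glue hp hqp, fun j hj => ?_, ?_⟩, splice_of_ge hqp hmi⟩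
  · rcases le_or_gt j m with h | h
    · rw [splice_of_le h]
      exact hq.dist_le j h
    · rw [splice_of_lt h]
      exact hd j h hj
  · filter_upwards [hq.eventually_mem, hl] with j hj hjm
    rwa [splice_of_le hjm]

theorem leaf_succ (hl : Iic i ∈ l) :
    leaf T l D t (i + 1) = leafImage T (leaf T l D t i) (t (i + 1)) := by
  ext b'
  constructor
  · rintro ⟨p, hp, rfl⟩
    exact ⟨hp.dist_le _ le_rfl, p i, (hp.mono (by lia)).mem_leaf, hp.isPastPath i (by lia)⟩
  · rintro ⟨hb', b, ⟨p, hp, rfl⟩, hT⟩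
    have hend : splice i p (fun _ => b') (i + 1) = b' := splice_of_lt (lt_add_one i)
    rw [← hend]
    refine mem_leaf_of_glue hl (by simpa [splice_of_le] using hp.mem_leaf) (by lia)
      (isPastPath_splice hp.isPastPath (fun _ => hT) fun j _ _ => by lia) fun j hij hj => ?_
    obtain rfl : j = i + 1 := by lia
    rwa [hend]

theorem leaf_congr (ht : ∀ j ≤ i, t j = t' j) (hD : ∀ᶠ j in l, D j = D' j) :
    leaf T l D t i = leaf T l D' t' i := by
  refine Set.ext fun b => exists_congr fun p => and_congr_left' ⟨fun hp => ?_, fun hp => ?_⟩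
  · exact ⟨hp.isPastPath, fun j hj => ht j hj ▸ hp.dist_le j hj,
      (hp.eventually_mem.and hD).mono fun j h => h.2 ▸ h.1⟩
  · exact ⟨hp.isPastPath, fun j hj => ht j hj ▸ hp.dist_le j hj,
      (hp.eventually_mem.and hD).mono fun j h => h.2 ▸ h.1⟩

theorem NonexpandingPast.leaf_recenter (h : NonexpandingPast T) (hr : IsPastPath T r i)
    (hrt : ∀ j ≤ i, dist (r j) (t j) ≤ 1) (ha : a ∈ leaf T l D r i) (hd : dist a (r i) ≤ 7) :
    a ∈ leaf T l D t i := by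
  obtain ⟨p, hp, rfl⟩ := ha
  have hpr := h i 7 p r (by norm_num) hp.isPastPath hr
    (fun j hj => (hp.dist_le j hj).trans (by norm_num)) hd
  refine ⟨p, ⟨hp.isPastPath, fun j hj => ?_, hp.eventually_mem⟩, rfl⟩
  linarith [dist_triangle (p j) (r j) (t j), hpr j hj, hrt j hj]

theorem NonexpandingPast.mem_leaf_iff (h : NonexpandingPast T) (hr : IsPastPath T r i)
    (ht : IsPastPath T t i) (hrt : ∀ j ≤ i, dist (r j) (t j) ≤ 1) (hd : dist a (r i) ≤ 6) :
    a ∈ leaf T l D r i ↔ a ∈ leaf T l D t i :=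
  ⟨fun ha => h.leaf_recenter hr hrt ha (hd.trans (by norm_num)),
    fun ha => h.leaf_recenter ht (fun j hj => dist_comm (r j) (t j) ▸ hrt j hj) ha (by
      linarith [dist_triangle a (r i) (t i), hrt i le_rfl])⟩

theorem ContractingPast.leaf_subset (h : ContractingPast T M) (hr : IsPastPath T r i)
    (hrt : ∀ j, i - M < j → j ≤ i → r j = t j) (hl' : Iic (i - M) ∈ l')
    (hm : ∀ a ∈ leaf T l D r (i - M), dist a (r (i - M)) ≤ 1 → a ∈ leaf T l' D' t (i - M)) :
    leaf T l D r i ⊆ leaf T l' D' t i := by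
  rintro _ ⟨p, hp, rfl⟩
  refine mem_leaf_of_glue hl' (hm _ (hp.mono (by lia)).mem_leaf ?_) (by lia) hp.isPastPath
    fun j hmj hj => hrt j hmj hj ▸ hp.dist_le j hj
  exact h i p r hp.isPastPath hr (fun j hj => (hp.dist_le j hj).trans (by norm_num)) _ le_rfl

theorem seed_shift_subset (c : ℤ) :
    seed T t (n + c) (i + c) ⊆ seed T (fun k => t (k + c)) n i := by
  rintro _ ⟨p, hp, rfl⟩
  refine ⟨fun k => p (k + c), ⟨hp.isPastPath.shift, fun j hj => hp.dist_le _ (by lia), ?_⟩, rfl⟩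
  exact eventually_principal.2 fun j hj =>
    eventually_principal.1 hp.eventually_mem (j + c) (add_le_add_left (mem_Iic.1 hj) c)

theorem seed_shift (c : ℤ) : seed T (fun k => t (k + c)) n i = seed T t (n + c) (i + c) := by
  refine (subset_antisymm (seed_shift_subset c) ?_).symm
  simpa only [add_neg_cancel_right, neg_add_cancel_right] using
    seed_shift_subset (T := T) (t := fun k => t (k + c)) (n := n + c) (i := i + c) (-c)

end Leaves

section SeededLetters

variable {A : Type*} [PseudoMetricSpace A] {T : A → A → Prop} {u : Marked A} {t : ℤ → A}
  {n : ℤ} {b : A}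

/-- A letter marked by a leaf of paths with a common past. -/
def IsSeeded (T : A → A → Prop) (u : Marked A) : Prop :=
  ∃ t, ∃ n ≤ 0, IsPastPath T t 0 ∧ u = ⟨t 0, seed T t n 0⟩

theorem isSeeded_of_isPastPath {i : ℤ} (ht : IsPastPath T t i) (hn : n ≤ i) :
    IsSeeded T ⟨t i, seed T t n i⟩ := by
  refine ⟨fun k => t (k + i), n - i, by lia, IsPastPath.shift (by rwa [zero_add]), ?_⟩
  simp [seed_shift]

theorem IsSeeded.exists_seed (hu : IsSeeded T u) (i : ℤ) :
    ∃ t, ∃ n ≤ i, IsPastPath T t i ∧ t i = u.pt ∧ seed T t n i = u.mark := by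
  obtain ⟨t, n, hn, ht, rfl⟩ := hu
  refine ⟨fun k => t (k + -i), n + i, by lia, IsPastPath.shift (by rwa [add_neg_cancel]), ?_, ?_⟩
  · simp
  · rw [seed_shift, add_neg_cancel_right, add_neg_cancel]

theorem IsSeeded.pt_mem_mark (hu : IsSeeded T u) : u.pt ∈ u.mark := by
  obtain ⟨t, n, -, ht, rfl⟩ := hu
  exact IsLeafPath.mem_leaf ⟨ht, fun j _ => by simp, eventually_principal.2 fun j _ => rfl⟩

theorem IsSeeded.step (hu : IsSeeded T u) (hb : T u.pt b) :
    IsSeeded T ⟨b, leafImage T u.mark b⟩ := by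
  obtain ⟨t, n, hn, ht, rfl⟩ := hu
  let s := splice 0 t fun _ => b
  have hst : ∀ j ≤ 0, s j = t j := fun j hj => splice_of_le hj
  have hs1 : s (0 + 1) = b := splice_of_lt zero_lt_one
  have hs : IsPastPath T s (0 + 1) :=
    isPastPath_splice ht (fun _ => hb) fun j _ _ => by lia
  have hseed : seed T s n (0 + 1) = leafImage T (seed T t n 0) b := by
    rw [seed, leaf_succ (mem_principal.2 (Iic_subset_Iic.2 hn)), hs1]
    congr 1
    exact leaf_congr hst (eventually_principal.2 fun j hj => by rw [hst j (hj.trans hn)])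
  have h := isSeeded_of_isPastPath hs (by lia : n ≤ 0 + 1)
  rwa [hseed, hs1] at h

end SeededLetters

section LeafPaths

variable {A : Type*} [PseudoMetricSpace A] {T : A → A → Prop} {x : ℤ → Marked A}
  {p t : ℤ → A} {i m : ℤ} {b : A}

/-- Transitions between letters marked by local unstable leaves: the letter moves by `T`, and the
mark becomes the part of its image near the new letter. -/
structure LeafStep (T : A → A → Prop) (u v : Marked A) : Prop where
  isSeeded : IsSeeded T u
  step : T u.pt v.pt
  mark_eq : v.mark = leafImage T u.mark v.pt

theorem IsPath.pt (hx : IsPath (LeafStep T) x) : IsPath T fun i => (x i).pt :=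
  fun i => (hx i).step

theorem IsPath.mark_eq (hx : IsPath (LeafStep T) x) (i : ℤ) :
    (x i).mark = leafImage T (x (i - 1)).mark (x i).pt := by
  have h := (hx (i - 1)).mark_eq
  rwa [sub_add_cancel] at h

theorem IsPath.dist_pt_le (hx : IsPath (LeafStep T) x) (hb : b ∈ (x i).mark) :
    dist b (x i).pt ≤ 8 :=
  (hx.mark_eq i ▸ hb).1

theorem IsPath.exists_isPastPath_mem_mark (hx : IsPath (LeafStep T) x) (hb : b ∈ (x i).mark) :
    ∃ p, IsPastPath T p i ∧ (∀ j ≤ i, p j ∈ (x j).mark) ∧ p i = b :=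
  exists_isPastPath_mem (D := fun j => (x j).mark)
    (fun j _ _ hb' => ((hx j).mark_eq ▸ hb').2) hb

theorem IsPath.mem_mark_of_isPastPath (hx : IsPath (LeafStep T) x) (hp : IsPastPath T p i)
    (hm : p m ∈ (x m).mark) (hmi : m ≤ i)
    (hd : ∀ j, m < j → j ≤ i → dist (p j) (x j).pt ≤ 8) : p i ∈ (x i).mark := by
  induction i, hmi using Int.leInduction with
  | base => exact hm
  | succ i hmi ih =>
    rw [(hx i).mark_eq]
    exact ⟨hd _ (by lia) le_rfl, p i,
      ih (hp.mono (by lia)) fun j hmj hj => hd j hmj (by lia), hp i (lt_add_one i)⟩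

theorem IsPath.mark_eq_leaf (hx : IsPath (LeafStep T) x) (i : ℤ) :
    (x i).mark = leaf T atBot (fun j => (x j).mark) (fun j => (x j).pt) i := by
  ext b
  constructor
  · intro hb
    obtain ⟨p, hp, hpD, rfl⟩ := hx.exists_isPastPath_mem_mark hb
    exact IsLeafPath.mem_leaf ⟨hp, fun j hj => hx.dist_pt_le (hpD j hj),
      (eventually_le_atBot i).mono hpD⟩
  · rintro ⟨p, hp, rfl⟩
    obtain ⟨m, hm, hmi⟩ := (hp.eventually_mem.and (eventually_le_atBot i)).exists
    exact hx.mem_mark_of_isPastPath hp.isPastPath hm hmi fun j _ hj => hp.dist_le j hj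

theorem NonexpandingPast.exists_isPastPath_mem_mark (h : NonexpandingPast T)
    (hx : IsPath (LeafStep T) x) {r : ℝ} (hr : 1 ≤ r) (hb : b ∈ (x i).mark)
    (hbr : dist b (x i).pt ≤ r) : ∃ p, IsPastPath T p i ∧ (∀ j ≤ i, p j ∈ (x j).mark) ∧
      (∀ j ≤ i, dist (p j) (x j).pt ≤ r) ∧ p i = b := by
  obtain ⟨p, hp, hpD, rfl⟩ := hx.exists_isPastPath_mem_mark hb
  exact ⟨p, hp, hpD, h i r p _ hr hp (hx.pt.isPastPath i)
    (fun j hj => (hx.dist_pt_le (hpD j hj)).trans (by norm_num)) hbr, rfl⟩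

theorem exists_isPath_leafStep [Finite A] (ht : IsPath T t) :
    ∃ x, IsPath (LeafStep T) x ∧ ∀ i, (x i).pt = t i := by
  refine ⟨fun i => ⟨t i, leaf T atBot (fun j => {t j}) t i⟩,
    fun i => ⟨?_, ht i, leaf_succ (Iic_mem_atBot i)⟩, fun _ => rfl⟩
  have hseed : ∀ b ∈ leaf T atBot (fun j => {t j}) t i, ∀ᶠ n in atBot, b ∈ seed T t n i := by
    rintro _ ⟨p, hp, rfl⟩
    obtain ⟨N, hN⟩ := eventually_atBot.1 hp.eventually_mem
    filter_upwards [eventually_le_atBot N] with n hn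
    exact IsLeafPath.mem_leaf ⟨hp.isPastPath, hp.dist_le,
      eventually_principal.2 fun j hj => hN j (le_trans hj hn)⟩
  obtain ⟨n, hn, hni⟩ :=
    (((toFinite _).eventually_all.2 hseed).and (eventually_le_atBot i)).exists
  have heq : leaf T atBot (fun j => {t j}) t i = seed T t n i := by
    refine subset_antisymm hn ?_
    rintro _ ⟨p, hp, rfl⟩
    exact IsLeafPath.mem_leaf ⟨hp.isPastPath, hp.dist_le,
      hp.eventually_mem.filter_mono (le_principal_iff.2 (Iic_mem_atBot n))⟩
  simp only [heq]
  exact isSeeded_of_isPastPath (ht.isPastPath i) hni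

end LeafPaths

section LeafClose

variable {A : Type*} [PseudoMetricSpace A] {T : A → A → Prop} {x y : ℤ → Marked A}
  {i m : ℤ} {b : A} {M : ℕ} {u v : Marked A}

/-- Letters that are `1`-close and whose marks agree near them. -/
structure LeafClose (u v : Marked A) : Prop where
  dist_le : dist u.pt v.pt ≤ 1
  mem_right : ∀ b ∈ u.mark, dist b u.pt ≤ 4 → b ∈ v.mark
  mem_left : ∀ b ∈ v.mark, dist b v.pt ≤ 4 → b ∈ u.mark

theorem LeafClose.refl (u : Marked A) : LeafClose u u :=
  ⟨by simp, fun _ h _ => h, fun _ h _ => h⟩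

theorem LeafClose.symm (h : LeafClose u v) : LeafClose v u :=
  ⟨dist_comm u.pt v.pt ▸ h.dist_le, h.mem_left, h.mem_right⟩

theorem mem_mark_of_comp (h : Relation.Comp LeafClose LeafClose u v) (hb : b ∈ u.mark)
    (hd : dist b u.pt ≤ 1) : b ∈ v.mark := by
  obtain ⟨w, huw, hwv⟩ := h
  exact hwv.mem_right b (huw.mem_right b hb (by linarith))
    (by linarith [dist_triangle b u.pt w.pt, huw.dist_le])

theorem dist_le_of_comp (h : Relation.Comp LeafClose LeafClose u v) : dist u.pt v.pt ≤ 2 := by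
  obtain ⟨w, huw, hwv⟩ := h
  linarith [dist_triangle u.pt w.pt v.pt, huw.dist_le, hwv.dist_le]

theorem comp_leafClose_symm (h : Relation.Comp LeafClose LeafClose u v) :
    Relation.Comp LeafClose LeafClose v u :=
  let ⟨w, huw, hwv⟩ := h
  ⟨w, hwv.symm, huw.symm⟩

theorem IsAdapted.mem_mark_of_comp (h : IsAdapted T M) (hx : IsPath (LeafStep T) x)
    (hy : IsPath (LeafStep T) y) (hmi : m ≤ i - M)
    (hm : Relation.Comp LeafClose LeafClose (x m) (y m))
    (hd : ∀ j, m < j → j ≤ i → dist (x j).pt (y j).pt ≤ 4) (hb : b ∈ (x i).mark)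
    (hbx : dist b (x i).pt ≤ 4) : b ∈ (y i).mark := by
  obtain ⟨p, hp, hpD, hpd, rfl⟩ :=
    h.nonexpandingPast.exists_isPastPath_mem_mark hx (by norm_num) hb hbx
  have hpm : dist (p m) (x m).pt ≤ 1 := h.contractingPast i p _ hp (hx.pt.isPastPath i)
    (fun j hj => (hpd j hj).trans (by norm_num)) m hmi
  refine hy.mem_mark_of_isPastPath hp (SmaleCover.mem_mark_of_comp hm (hpD m (by lia)) hpm)
    (by lia) fun j hmj hj => ?_
  linarith [dist_triangle (p j) (x j).pt (y j).pt, hpd j hj, hd j hmj hj]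

theorem IsAdapted.leafClose_of_comp (h : IsAdapted T M) (hx : IsPath (LeafStep T) x)
    (hy : IsPath (LeafStep T) y) (hmi : m ≤ i - M)
    (hm : Relation.Comp LeafClose LeafClose (x m) (y m))
    (hd : ∀ j, m < j → j ≤ i → dist (x j).pt (y j).pt ≤ 4) (hi : dist (x i).pt (y i).pt ≤ 1) :
    LeafClose (x i) (y i) :=
  ⟨hi, fun _ => h.mem_mark_of_comp hx hy hmi hm hd,
    fun _ => h.mem_mark_of_comp hy hx hmi (comp_leafClose_symm hm)
      fun j hmj hj => dist_comm (x j).pt (y j).pt ▸ hd j hmj hj⟩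

theorem IsAdapted.leafClose_of_frequently_comp (h : IsAdapted T M) (hx : IsPath (LeafStep T) x)
    (hy : IsPath (LeafStep T) y) (hd : ∀ i, dist (x i).pt (y i).pt ≤ 9)
    (hm : ∃ᶠ m in atBot, Relation.Comp LeafClose LeafClose (x m) (y m)) (i : ℤ) :
    LeafClose (x i) (y i) := by
  have hd' := h.contractingPast.isTight _ _ hx.pt hy.pt hd
  obtain ⟨m, hm, hmi⟩ := (hm.and_eventually (eventually_le_atBot (i - M))).exists
  exact h.leafClose_of_comp hx hy hmi hm (fun j _ _ => (hd' j).trans (by norm_num)) (hd' i)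

theorem IsAdapted.exists_window_leafClose [Finite A] (h : IsAdapted T M) :
    ∃ n : ℕ, ∀ x y, IsPath (LeafStep T) x → IsPath (LeafStep T) y →
      (∀ i : ℤ, i.natAbs ≤ n → Relation.Comp LeafClose LeafClose (x i) (y i)) →
      LeafClose (x 0) (y 0) := by
  by_contra! hcon
  choose x y hx hy hxy hne using hcon
  let U := Ultrafilter.of (atTop : Filter ℕ)
  obtain ⟨x', hx'⟩ := exists_ultralimit U x
  obtain ⟨y', hy'⟩ := exists_ultralimit U y
  have hcomp : ∀ i, Relation.Comp LeafClose LeafClose (x' i) (y' i) := fun i => by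
    have hi : ∀ᶠ n in U, i.natAbs ≤ n := Ultrafilter.of_le atTop (eventually_ge_atTop _)
    obtain ⟨n, hn, hxn, hyn⟩ := (hi.and ((hx' i).and (hy' i))).exists
    exact hxn ▸ hyn ▸ hxy n i hn
  have hlim := h.leafClose_of_frequently_comp
    (isPath_of_eventually_eq (fun i => .of_forall fun n => hx n i) hx')
    (isPath_of_eventually_eq (fun i => .of_forall fun n => hy n i) hy')
    (fun i => (dist_le_of_comp (hcomp i)).trans (by norm_num)) (.of_forall hcomp) 0
  obtain ⟨n, hxn, hyn⟩ := ((hx' 0).and (hy' 0)).exists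
  exact hne n (hxn ▸ hyn ▸ hlim)

theorem IsAdapted.mark_subset_of_leafClose (h : IsAdapted T M) (hx : IsPath (LeafStep T) x)
    (hy : IsPath (LeafStep T) y) (hxy : ∀ i, LeafClose (x i) (y i))
    (hpt : ∀ i, (x i).pt = (y i).pt) (i : ℤ) : (x i).mark ⊆ (y i).mark := by
  intro b hb
  obtain ⟨p, hp, hpD, rfl⟩ := hx.exists_isPastPath_mem_mark hb
  have hpm : dist (p (i - M)) (x (i - M)).pt ≤ 1 :=
    h.contractingPast i p _ hp (hx.pt.isPastPath i)
      (fun j hj => (hx.dist_pt_le (hpD j hj)).trans (by norm_num)) _ le_rfl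
  exact hy.mem_mark_of_isPastPath hp
    ((hxy _).mem_right _ (hpD _ (by lia)) (hpm.trans (by norm_num))) (by lia)
    fun j _ hj => hpt j ▸ hx.dist_pt_le (hpD j hj)

/-- The letters of `y` lie in the marks of `x`, that is, they end paths with the same past as `x`;
having the same future as well, they are those of `x` in the absence of diamonds. -/
theorem IsAdapted.pt_eq_of_leafClose (h : IsAdapted T M) (hx : IsPath (LeafStep T) x)
    (hy : IsPath (LeafStep T) y) (hxy : ∀ i, LeafClose (x i) (y i))
    (hev : ∀ᶠ i in atTop, x i = y i) (i : ℤ) : (x i).pt = (y i).pt := by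
  have hmem : (y i).pt ∈ (x i).mark :=
    (hxy i).mem_left _ (hy i).isSeeded.pt_mem_mark (by simp)
  obtain ⟨t, n, hn, ht, hti, hseed⟩ := (hx i).isSeeded.exists_seed i
  rw [← hseed] at hmem
  obtain ⟨p, hp, hpi⟩ := hmem
  have heq := h.noDiamond _ _ (ht.glue_isPath hx.pt hti) (hp.isPastPath.glue_isPath hy.pt hpi)
    ?_ ?_ fun j => ?_
  · simpa only [splice_of_le le_rfl, hti, hpi] using congrFun heq i
  · filter_upwards [eventually_le_atBot n] with j hj
    rw [splice_of_le (hj.trans hn), splice_of_le (hj.trans hn)]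
    exact (eventually_principal.1 hp.eventually_mem j hj).symm
  · filter_upwards [hev, eventually_gt_atTop i] with j hj hij
    rw [splice_of_lt hij, splice_of_lt hij, hj]
  · rcases le_or_gt j i with hj | hj
    · rw [splice_of_le hj, splice_of_le hj, dist_comm]
      exact (hp.dist_le j hj).trans (by norm_num)
    · rw [splice_of_lt hj, splice_of_lt hj]
      exact (hxy j).dist_le.trans (by norm_num)

theorem IsAdapted.eq_of_leafClose (h : IsAdapted T M) (hx : IsPath (LeafStep T) x)
    (hy : IsPath (LeafStep T) y) (hxy : ∀ i, LeafClose (x i) (y i))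
    (hev : ∀ᶠ i in atTop, x i = y i) : x = y := by
  have hpt := h.pt_eq_of_leafClose hx hy hxy hev
  exact funext fun i => Marked.ext (hpt i) <| subset_antisymm
    (h.mark_subset_of_leafClose hx hy hxy hpt i)
    (h.mark_subset_of_leafClose hy hx (fun i => (hxy i).symm) (fun i => (hpt i).symm) i)

end LeafClose

section Brackets

variable {A : Type*} [PseudoMetricSpace A] {T : A → A → Prop} {x y : ℤ → Marked A}
  {r : ℤ → A} {s j m : ℤ} {b : A} {M : ℕ}

/-- The sequence `r` with the marks of `y` moved to leaves around `r`. -/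
def recenter (T : A → A → Prop) (y : ℤ → Marked A) (r : ℤ → A) (j : ℤ) : Marked A :=
  ⟨r j, leaf T atBot (fun k => (y k).mark) r j⟩

theorem IsAdapted.mem_recenter_iff (h : IsAdapted T M) (hy : IsPath (LeafStep T) y)
    (hr : IsPastPath T r j) (hry : ∀ k ≤ j, dist (r k) (y k).pt ≤ 1) (hb : dist b (r j) ≤ 6) :
    b ∈ (recenter T y r j).mark ↔ b ∈ (y j).mark := by
  rw [hy.mark_eq_leaf]
  exact h.nonexpandingPast.mem_leaf_iff hr (hy.pt.isPastPath j) hry hb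

theorem IsAdapted.leafClose_recenter (h : IsAdapted T M) (hy : IsPath (LeafStep T) y)
    (hr : IsPastPath T r j) (hry : ∀ k ≤ j, dist (r k) (y k).pt ≤ 1) :
    LeafClose (recenter T y r j) (y j) where
  dist_le := hry j le_rfl
  mem_right b hb hd := (h.mem_recenter_iff hy hr hry (hd.trans (by norm_num))).1 hb
  mem_left b hb hd := (h.mem_recenter_iff hy hr hry (by
    linarith [dist_triangle_right b (r j) (y j).pt, hry j le_rfl])).2 hb

theorem IsAdapted.exists_mem_seed_iff (h : IsAdapted T M) (hy : IsPath (LeafStep T) y)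
    (hr : IsPastPath T r m) (hry : ∀ k ≤ m, dist (r k) (y k).pt ≤ 1) (hrm : r m ∈ (y m).mark) :
    ∃ q, ∃ n ≤ m, IsPastPath T q m ∧ q m = r m ∧
      ∀ b, dist b (r m) ≤ 1 → (b ∈ (recenter T y r m).mark ↔ b ∈ seed T q n m) := by
  obtain ⟨t, n, hn, ht, htm, hseed⟩ := (hy m).isSeeded.exists_seed m
  obtain ⟨q, hq, hqm⟩ := hseed ▸ hrm
  have hqt : ∀ k ≤ m, dist (q k) (t k) ≤ 1 := h.nonexpandingPast m 1 q t le_rfl hq.isPastPath ht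
    (fun k hk => (hq.dist_le k hk).trans (by norm_num)) (by rw [hqm, htm]; exact hry m le_rfl)
  have hqt' : ∀ᶠ k in 𝓟 (Iic n), ({q k} : Set A) = {t k} :=
    hq.eventually_mem.mono fun k hk => by rw [mem_singleton_iff.1 hk]
  refine ⟨q, n, hn, hq.isPastPath, hqm, fun b hb => ?_⟩
  rw [h.mem_recenter_iff hy hr hry (hb.trans (by norm_num)), ← hseed, seed, seed,
    leaf_congr (fun _ _ => rfl) hqt']
  exact (h.nonexpandingPast.mem_leaf_iff hq.isPastPath ht hqt
    (by rw [hqm]; exact hb.trans (by norm_num))).symm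

theorem IsAdapted.isSeeded_recenter (h : IsAdapted T M) (hy : IsPath (LeafStep T) y)
    (hr : IsPastPath T r j) (hry : ∀ k ≤ j, dist (r k) (y k).pt ≤ 1)
    (hrD : r (j - M) ∈ (y (j - M)).mark) : IsSeeded T (recenter T y r j) := by
  have hmj : j - M ≤ j := by lia
  obtain ⟨q, n, hn, hq, hqr, hmem⟩ := h.exists_mem_seed_iff hy (hr.mono hmj)
    (fun k hk => hry k (hk.trans hmj)) hrD
  let r' := splice (j - M) q r
  have hr'q : ∀ k ≤ j - M, r' k = q k := fun k hk => splice_of_le hk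
  have hr'r : ∀ k, j - M ≤ k → r' k = r k := fun k hk => splice_of_ge hqr hk
  have hr' : IsPastPath T r' j := hq.glue hr hqr
  have hseed : seed T r' n (j - M) = seed T q n (j - M) :=
    leaf_congr hr'q (eventually_principal.2 fun k hk => by rw [hr'q k (le_trans hk hn)])
  have heq : leaf T atBot (fun k => (y k).mark) r j = seed T r' n j := by
    refine subset_antisymm
      (h.contractingPast.leaf_subset hr (fun k hk _ => (hr'r k hk.le).symm)
        (mem_principal.2 (Iic_subset_Iic.2 hn)) fun a ha hd => ?_)
      (h.contractingPast.leaf_subset hr' (fun k hk _ => hr'r k hk.le)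
        (Iic_mem_atBot _) fun a ha hd => ?_)
    · exact hseed.superset ((hmem a hd).1 ha)
    · rw [hr'r _ le_rfl] at hd
      exact (hmem a hd).2 (hseed.subset ha)
  have hend := isSeeded_of_isPastPath hr' (hn.trans hmj)
  rwa [hr'r j hmj, ← heq] at hend

theorem IsAdapted.isPath_recenter (h : IsAdapted T M) (hy : IsPath (LeafStep T) y)
    (hr : IsPath T r) (hry : ∀ k ≤ s, dist (r k) (y k).pt ≤ 1)
    (hrD : ∀ k ≤ s, r k ∈ (y k).mark) : IsPath (LeafStep T) (recenter T y r) := by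
  have hmark : ∀ j, (recenter T y r (j + 1)).mark =
      leafImage T (recenter T y r j).mark (r (j + 1)) := fun j => leaf_succ (Iic_mem_atBot j)
  have hpast : ∀ j ≤ s, IsSeeded T (recenter T y r j) := fun j hj =>
    h.isSeeded_recenter hy (hr.isPastPath j) (fun k hk => hry k (hk.trans hj)) (hrD _ (by lia))
  have hseeded : ∀ j, IsSeeded T (recenter T y r j) := fun j => by
    rcases le_total j s with hj | hj
    · exact hpast j hj
    induction j, hj using Int.leInduction with
    | base => exact hpast s le_rfl
    | succ j _ ih =>
      have hnext : recenter T y r (j + 1) = ⟨_, leafImage T (recenter T y r j).mark (r (j + 1))⟩ :=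
        Marked.ext rfl (hmark j)
      exact hnext ▸ ih.step (hr j)
  exact fun j => ⟨hseeded j, hr j, hmark j⟩

theorem IsAdapted.exists_bracket (h : IsAdapted T M) (hx : IsPath (LeafStep T) x)
    (hy : IsPath (LeafStep T) y) (hxy : ∀ i, s - M ≤ i → i ≤ s → LeafClose (x i) (y i)) :
    ∃ z, IsPath (LeafStep T) z ∧ (∀ j ≤ s, LeafClose (z j) (y j)) ∧
      ∀ j, s ≤ j → LeafClose (z j) (x j) := by
  have hs := hxy s (by lia) le_rfl
  obtain ⟨r, hrP, hrD, hry, hrs⟩ := h.nonexpandingPast.exists_isPastPath_mem_mark hy le_rfl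
    (hs.mem_right _ (hx s).isSeeded.pt_mem_mark (by simp)) hs.dist_le
  let r' := splice s r fun j => (x j).pt
  have hr'r : ∀ j ≤ s, r' j = r j := fun j hj => splice_of_le hj
  have hr'x : ∀ j, s ≤ j → r' j = (x j).pt := fun j hj => splice_of_ge hrs hj
  have hr' : IsPath T r' := hrP.glue_isPath hx.pt hrs
  have hr'y : ∀ j ≤ s, dist (r' j) (y j).pt ≤ 1 := fun j hj => hr'r j hj ▸ hry j hj
  have hz := h.isPath_recenter hy hr' hr'y fun j hj => hr'r j hj ▸ hrD j hj
  have hzy : ∀ j ≤ s, LeafClose (recenter T y r' j) (y j) := fun j hj =>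
    h.leafClose_recenter hy (hr'.isPastPath j) fun k hk => hr'y k (hk.trans hj)
  have hzx : ∀ j, s ≤ j → dist (recenter T y r' j).pt (x j).pt = 0 := fun j hj => by
    simp only [recenter, hr'x j hj, dist_self]
  have hzyx : ∀ j, s - M ≤ j → j ≤ s →
      Relation.Comp LeafClose LeafClose (recenter T y r' j) (x j) :=
    fun j hsj hj => ⟨y j, hzy j hj, (hxy j hsj hj).symm⟩
  refine ⟨recenter T y r', hz, hzy, fun j hj => h.leafClose_of_comp (m := s - M) hz hx (by lia)
    (hzyx _ le_rfl (by lia)) (fun k hsk _ => ?_) (by norm_num [hzx j hj])⟩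
  rcases le_total k s with hk | hk
  · exact (dist_le_of_comp (hzyx k hsk.le hk)).trans (by norm_num)
  · norm_num [hzx k hk]

end Brackets

section Expansiveness

variable {Y : Type*} {f : Equiv.Perm Y}

theorem continuous_zpow [TopologicalSpace Y] (hf : Continuous f) (hf' : Continuous f.symm) (n : ℤ) :
    Continuous (f ^ n : Equiv.Perm Y) := by
  induction n using Int.induction_on with
  | zero => exact continuous_id
  | succ n ih => exact zpow_add_one f n ▸ ih.comp hf
  | pred n ih => exact zpow_sub_one f (-n) ▸ ih.comp hf'

theorem zpow_apply_of_succ {g : ℤ → Y} (hg : ∀ n, g (n + 1) = f (g n)) (n : ℤ) :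
    (f ^ n) (g 0) = g n := by
  induction n using Int.induction_on with
  | zero => rfl
  | succ n ih => rw [add_comm, zpow_one_add, Equiv.Perm.mul_apply, ih, ← hg, add_comm]
  | pred n ih =>
    rw [sub_eq_neg_add, zpow_add, Equiv.Perm.mul_apply, ih, zpow_neg_one,
      Equiv.Perm.inv_eq_iff_eq, ← hg]
    congr 1
    ring

theorem _root_.Expansive.eq_of_forall_dist_le [MetricSpace Y] {c : ℝ} (hc : Expansive f c)
    {y y' : Y} (h : ∀ i : ℤ, dist ((f ^ i) y) ((f ^ i) y') ≤ c) : y = y' := by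
  by_contra hne
  obtain ⟨i, hi⟩ := hc y y' hne
  exact (h i).not_gt hi

theorem _root_.Expansive.exists_forall_dist_lt [MetricSpace Y] [CompactSpace Y] {c ε : ℝ}
    (hc : Expansive f c) (hf : Continuous f) (hf' : Continuous f.symm) (hε : 0 < ε) :
    ∃ n : ℕ, ∀ y y', (∀ i : ℤ, i.natAbs ≤ n → dist ((f ^ i) y) ((f ^ i) y') ≤ c) →
      dist y y' < ε := by
  by_contra! hcon
  choose y y' hy hd using hcon
  let U := Ultrafilter.of (atTop : Filter ℕ)
  have ha : Tendsto y U (𝓝 (U.map y).lim) := (U.map y).le_nhds_lim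
  have hb : Tendsto y' U (𝓝 (U.map y').lim) := (U.map y').le_nhds_lim
  have heq := hc.eq_of_forall_dist_le fun i =>
    have hi : ∀ᶠ n in U, i.natAbs ≤ n := Ultrafilter.of_le atTop (eventually_ge_atTop _)
    have hi' := (continuous_zpow hf hf' i).tendsto
    le_of_tendsto (((hi' _).comp ha).dist ((hi' _).comp hb)) (hi.mono fun n hn => hy n i hn)
  have hlim : ε ≤ dist (U.map y).lim (U.map y').lim := ge_of_tendsto' (ha.dist hb) hd
  rw [heq, dist_self] at hlim
  exact hlim.not_gt hε

theorem exists_isPresentation_of_dist_le [MetricSpace Y] [CompactSpace Y] {B : Type*} {c : ℝ}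
    {T : B → B → Prop} {φ : (ℤ → B) → Y} {g : B → Y} (hf : Continuous f) (hf' : Continuous f.symm)
    (hc : Expansive f c) (hc0 : 0 < c) (hsurj : ∀ y, ∃ t, IsPath T t ∧ φ t = y)
    (hφ : ∀ t, IsPath T t → φ (shiftE B t) = f (φ t))
    (hg : ∀ t, IsPath T t → ∀ i, dist (g (t i)) ((f ^ i) (φ t)) ≤ c / 20) :
    ∃ _ : PseudoMetricSpace B, IsPresentation f T φ := by
  have hη : 0 < c / 10 := by positivity
  let _ : PseudoMetricSpace B :=
    { dist := fun u v => dist (g u) (g v) / (c / 10)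
      dist_self := fun u => by simp
      dist_comm := fun u v => by rw [dist_comm]
      dist_triangle := fun u v w => by
        rw [← add_div]
        exact div_le_div_of_nonneg_right (dist_triangle _ _ _) hη.le }
  have hdist : ∀ u v : B, dist u v = dist (g u) (g v) / (c / 10) := fun _ _ => rfl
  refine ⟨‹_›, hsurj, hφ _, fun {t t'} ht ht' he i => ?_, fun ε hε => ?_⟩
  · rw [hdist, div_le_one hη]
    have h := hg t ht i
    rw [he] at h
    linarith [dist_triangle_right (g (t i)) (g (t' i)) ((f ^ i) (φ t')), hg t' ht' i]
  · obtain ⟨n, hn⟩ := hc.exists_forall_dist_lt hf hf' hε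
    refine ⟨n, fun t t' ht ht' h => hn _ _ fun i hi => ?_⟩
    have h9 := (div_le_iff₀ hη).1 (hdist _ _ ▸ h i hi)
    linarith [hg t ht i, hg t' ht' i, dist_triangle_left ((f ^ i) (φ t)) ((f ^ i) (φ t')) (g (t i)),
      dist_triangle (g (t i)) (g (t' i)) ((f ^ i) (φ t'))]

end Expansiveness

section Subshifts

variable {B Y : Type*} {S : Set (ℤ → B)}

theorem shiftE_apply_add (s : ℤ → B) (i : ℤ) :
    (shiftE B fun k => s (k + i)) = fun k => s (k + (i + 1)) :=
  funext fun k => congrArg s (by ring)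

theorem _root_.ShiftInvariant.shift_mem (hS : ShiftInvariant S) {s : ℤ → B} (hs : s ∈ S) (i : ℤ) :
    (fun k => s (k + i)) ∈ S := by
  induction i using Int.induction_on with
  | zero => simpa only [add_zero] using hs
  | succ i ih => exact shiftE_apply_add s i ▸ hS.1 _ ih
  | pred i ih =>
    have h := shiftE_apply_add s (-i - 1)
    rw [sub_add_cancel] at h
    exact (Equiv.symm_apply_eq _).2 h.symm ▸ hS.2 _ ih

theorem _root_.IsSFT.isClosed [TopologicalSpace B] [DiscreteTopology B] (hS : IsSFT S) :
    IsClosed S := by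
  obtain ⟨W, -, rfl⟩ := hS
  simp only [OccursIn, not_exists, ofPred_forall]
  refine isClosed_biInter fun w _ => isClosed_iInter fun i => isOpen_compl_iff.1 ?_
  simp only [compl_ofPred, not_not, ofPred_forall]
  exact isOpen_iInter_of_finite fun j => (continuous_apply (A := fun _ : ℤ => B)
    (i + (j : ℤ))).isOpen_preimage {w.2 j} (isOpen_discrete _)

theorem _root_.IsSubshiftFactorMap.compactSpace {N : ℕ} [MetricSpace Y] {S : Set (ℤ → Fin N)}
    {F : Equiv.Perm Y} {α : (ℤ → Fin N) → Y} (hα : IsSubshiftFactorMap S F α) (hS : IsSFT S) :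
    CompactSpace Y :=
  ⟨hα.2.1 ▸ hS.isClosed.isCompact.image_of_continuousOn hα.1⟩

theorem _root_.IsSFT.exists_mem_of_windows (hS : IsSFT S) : ∃ l : ℕ, ∀ x : ℤ → B,
    (∀ i, ∃ s ∈ S, ∀ j : ℕ, j ≤ l → s j = x (i + j)) → x ∈ S := by
  obtain ⟨W, hW, rfl⟩ := hS
  obtain ⟨l, hl⟩ := (hW.image Sigma.fst).bddAbove
  refine ⟨l, fun x hx w hw ⟨i, hi⟩ => ?_⟩
  obtain ⟨s, hs, hsx⟩ := hx i
  refine hs w hw ⟨0, fun j => ?_⟩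
  rw [zero_add, ← hi j]
  exact hsx j (j.2.le.trans (hl (mem_image_of_mem _ hw)))

theorem exists_window_dist_le [TopologicalSpace B] [DiscreteTopology B] [Finite B]
    [PseudoMetricSpace Y] {φ : (ℤ → B) → Y} (hS : IsClosed S) (hφ : ContinuousOn φ S) {ε : ℝ}
    (hε : 0 < ε) : ∃ L : ℕ, ∀ s ∈ S, ∀ s' ∈ S, (∀ i : ℤ, i.natAbs ≤ L → s i = s' i) →
      dist (φ s) (φ s') ≤ ε := by
  by_contra! hcon
  choose s hs s' hs' hss hd using hcon
  let U := Ultrafilter.of (atTop : Filter ℕ)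
  obtain ⟨x, hx⟩ := exists_ultralimit U s
  have hx' : ∀ i, ∀ᶠ n in U, s' n i = x i := fun i => by
    have hi : ∀ᶠ n in U, i.natAbs ≤ n := Ultrafilter.of_le atTop (eventually_ge_atTop _)
    filter_upwards [hi, hx i] with n hn hxn
    rw [← hxn, hss n i hn]
  have hlim : ∀ {r : ℕ → ℤ → B}, (∀ n, r n ∈ S) → (∀ i, ∀ᶠ n in U, r n i = x i) →
      Tendsto (φ ∘ r) U (𝓝 (φ x)) := fun {r} hr hrx => by
    have hrx' : Tendsto r U (𝓝 x) :=
      tendsto_pi_nhds.2 fun i => tendsto_const_nhds.congr' ((hrx i).mono fun _ h => h.symm)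
    exact (hφ x (hS.mem_of_tendsto hrx' (.of_forall hr))).tendsto.comp
      (tendsto_nhdsWithin_iff.2 ⟨hrx', .of_forall hr⟩)
  have h0 : ε ≤ dist (φ x) (φ x) :=
    ge_of_tendsto' ((hlim hs hx).dist (hlim hs' hx')) fun n => (hd n).le
  rw [dist_self] at h0
  exact h0.not_gt hε

theorem continuousOn_of_exists_window [TopologicalSpace B] [DiscreteTopology B]
    [PseudoMetricSpace Y] {φ : (ℤ → B) → Y} (h : ∀ ε > 0, ∃ n : ℕ, ∀ s ∈ S, ∀ s' ∈ S,
      (∀ i : ℤ, i.natAbs ≤ n → s i = s' i) → dist (φ s) (φ s') < ε) : ContinuousOn φ S := by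
  refine fun s hs => Metric.continuousWithinAt_iff'.2 fun ε hε => ?_
  obtain ⟨n, hn⟩ := h ε hε
  have hfin : {i : ℤ | i.natAbs ≤ n}.Finite :=
    (finite_Icc (-n : ℤ) n).subset fun i (hi : i.natAbs ≤ n) => by rw [mem_Icc]; lia
  have hwin : pi {i : ℤ | i.natAbs ≤ n} (fun i => {s i}) ∈ 𝓝 s :=
    set_pi_mem_nhds hfin fun i _ => (isOpen_discrete _).mem_nhds rfl
  filter_upwards [mem_nhdsWithin_of_mem_nhds hwin, self_mem_nhdsWithin] with s' hs's hs'
  exact hn s' hs' s hs hs's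

end Subshifts

section WordAlphabet

variable {B Y : Type*} {S : Set (ℤ → B)} {L : ℕ}

/-- The words of length `2 * L + 1` of the subshift `S`, centred at the origin and written with the
newest letter first, as `Overlap` requires. -/
def Word (S : Set (ℤ → B)) (L : ℕ) : Type _ :=
  {u : Fin (2 * L + 1) → B // ∃ s ∈ S, ∀ j : Fin (2 * L + 1), s (L - (j : ℕ)) = u j}

instance [Finite B] : Finite (Word S L) :=
  Subtype.finite

/-- The sequence spelled by a path of overlapping words. -/
def decode (t : ℤ → Word S L) (k : ℤ) : B :=
  (t (k - L)).1 0

/-- Transitions between words that overlap progressively. -/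
def WordStep (u v : Word S L) : Prop :=
  Overlap u.1 v.1

theorem apply_eq_decode {t : ℤ → Word S L} (ht : IsPath WordStep t) (i : ℤ)
    (j : Fin (2 * L + 1)) : (t i).1 j = decode t (i + L - (j : ℕ)) := by
  have hp : IsPastPath Overlap (fun i => (t i).1) i := fun k _ => ht k
  rw [overlap_apply hp j le_rfl, decode, show i + L - (j : ℕ) - L = i - (j : ℕ) by ring]

theorem eq_decode_of_mem_window {t : ℤ → Word S L} (ht : IsPath WordStep t) {i k : ℤ} {s : ℤ → B}
    (hs : ∀ j : Fin (2 * L + 1), s (L - (j : ℕ)) = (t i).1 j) (hk : k.natAbs ≤ L) :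
    s k = decode t (k + i) := by
  have h := hs ⟨(L - k).toNat, by lia⟩
  rw [apply_eq_decode ht] at h
  convert h using 2 <;> dsimp only <;> lia

theorem decode_mem {l : ℕ} (hl : ∀ x : ℤ → B,
    (∀ i, ∃ s ∈ S, ∀ j : ℕ, j ≤ l → s j = x (i + j)) → x ∈ S) (hlL : l ≤ L)
    {t : ℤ → Word S L} (ht : IsPath WordStep t) : decode t ∈ S := by
  refine hl _ fun i => ?_
  obtain ⟨s, hs, hst⟩ := (t i).2
  exact ⟨s, hs, fun j hj => by rw [eq_decode_of_mem_window ht hst (by lia), add_comm]⟩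

theorem exists_isPath_decode_eq (hS : ShiftInvariant S) {s : ℤ → B} (hs : s ∈ S) :
    ∃ t : ℤ → Word S L, IsPath WordStep t ∧ decode t = s := by
  refine ⟨fun i => ⟨fun j => s (i + L - (j : ℕ)), _, hS.shift_mem hs i,
    fun j => congrArg s (by ring)⟩, fun i j => ?_, funext fun k => ?_⟩
  · simp only [Fin.val_succ, Fin.val_castSucc]
    congr 1
    lia
  · simp [decode]

theorem exists_isPresentation [MetricSpace Y] {f : Equiv.Perm Y}
    (hY : FinitelyPresented f) : ∃ (A : Type) (_ : Finite A) (_ : PseudoMetricSpace A)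
      (T : A → A → Prop) (φ : (ℤ → A) → Y), IsPresentation f T φ := by
  obtain ⟨hf, hf', ⟨c, hc0, hc⟩, N, S, hSFT, hS, -, φ, hφ, hφS, hφf⟩ := hY
  have : CompactSpace Y := IsSubshiftFactorMap.compactSpace ⟨hφ, hφS, hφf⟩ hSFT
  obtain ⟨l, hl⟩ := hSFT.exists_mem_of_windows
  obtain ⟨L, hL⟩ := exists_window_dist_le hSFT.isClosed hφ (show 0 < c / 20 by positivity)
  let W := Word S (max l L)
  let T : W → W → Prop := WordStep
  have hdec : ∀ t, IsPath T t → decode t ∈ S := fun t => decode_mem hl (le_max_left l L)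
  choose rep hrepS hrep using fun u : W => u.2
  refine ⟨W, inferInstance, ?_⟩
  suffices h : ∃ _ : PseudoMetricSpace W, IsPresentation f T fun t => φ (decode t) from
    let ⟨m, h⟩ := h
    ⟨m, T, _, h⟩
  refine exists_isPresentation_of_dist_le (g := fun u => φ (rep u)) hf hf' hc hc0 (fun y => ?_)
    (fun t ht => ?_) fun t ht i => ?_
  · obtain ⟨s, hs, rfl⟩ : y ∈ φ '' S := hφS ▸ mem_univ y
    obtain ⟨t, ht, rfl⟩ := exists_isPath_decode_eq (L := max l L) hS hs
    exact ⟨t, ht, rfl⟩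
  · rw [← hφf _ (hdec t ht)]
    congr 1
    exact funext fun k => by simp only [decode, shiftE, Equiv.coe_fn_mk, sub_add_eq_add_sub]
  · have hzpow : (f ^ i) (φ (decode t)) = φ fun k => decode t (k + i) := by
      simpa using zpow_apply_of_succ (f := f) (g := fun i => φ fun k => decode t (k + i))
        (fun n => by rw [← hφf _ (hS.shift_mem (hdec t ht) n), shiftE_apply_add]) i
    rw [hzpow]
    exact hL _ (hrepS _) _ (hS.shift_mem (hdec t ht) i) fun k hk =>
      eq_decode_of_mem_window ht (hrep (t i)) (hk.trans (le_max_right l L))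

end WordAlphabet

section OrbitRelations

variable {Z : Type*} {G : Equiv.Perm Z} {E : Z → Z → Prop} {m n : ℕ} {x y : Z}

/-- The orbits of `x` and `y` are `E`-related at all times in the window `[-n, n]`. -/
def OrbitClose (G : Equiv.Perm Z) (E : Z → Z → Prop) (n : ℕ) (x y : Z) : Prop :=
  ∀ i : ℤ, i.natAbs ≤ n → E ((G ^ i) x) ((G ^ i) y)

/-- A closeness relation whose windows `OrbitClose G E n` form a base of a uniformity: a set-level
substitute for the relation `dist x y < c` of an expansive system with constant `2 * c`. -/
structure IsGenerating (G : Equiv.Perm Z) (E : Z → Z → Prop) : Prop where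
  refl : ∀ x, E x x
  symm : ∀ {x y}, E x y → E y x
  exists_of_comp : ∃ n : ℕ, ∀ x y,
    (∀ i : ℤ, i.natAbs ≤ n → Relation.Comp E E ((G ^ i) x) ((G ^ i) y)) → E x y

/-- Orbits that are `E`-related for long enough around time `0` can be interchanged there: some
orbit follows the past of `y` and the future of `x`. -/
def HasBrackets (G : Equiv.Perm Z) (E : Z → Z → Prop) : Prop :=
  ∃ M : ℕ, ∀ x y, OrbitClose G E M x y → ∃ z,
    (∀ i : ℤ, i ≤ 0 → E ((G ^ i) z) ((G ^ i) y)) ∧ ∀ i : ℤ, 0 ≤ i → E ((G ^ i) z) ((G ^ i) x)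

theorem OrbitClose.mono (h : OrbitClose G E n x y) (hmn : m ≤ n) : OrbitClose G E m x y :=
  fun i hi => h i (hi.trans hmn)

theorem IsGenerating.exists_orbitClose_of_comp (h : IsGenerating G E) (n : ℕ) :
    ∃ m ≥ n, ∀ x y, (∀ i : ℤ, i.natAbs ≤ m → Relation.Comp E E ((G ^ i) x) ((G ^ i) y)) →
      OrbitClose G E n x y := by
  obtain ⟨k, hk⟩ := h.exists_of_comp
  refine ⟨n + k, Nat.le_add_right n k, fun x y hxy i hi => hk _ _ fun j hj => ?_⟩
  simpa only [← Equiv.Perm.mul_apply, ← zpow_add] using hxy (j + i) (by lia)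

theorem HasBrackets.exists_bracket (h : HasBrackets G E) : ∃ M : ℕ, ∀ (m : ℕ) x y,
    OrbitClose G E (m + M) x y → ∃ z,
      (∀ i ≤ -(m : ℤ), E ((G ^ i) z) ((G ^ i) y)) ∧
      ∀ i ≥ -(m : ℤ), E ((G ^ i) z) ((G ^ i) x) := by
  obtain ⟨M, hM⟩ := h
  refine ⟨M, fun m x y hxy => ?_⟩
  obtain ⟨z, hzy, hzx⟩ := hM ((G ^ (-m : ℤ)) x) ((G ^ (-m : ℤ)) y) fun i hi => by
    simpa only [← Equiv.Perm.mul_apply, ← zpow_add] using hxy (i + -m) (by lia)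
  simp only [← Equiv.Perm.mul_apply, ← zpow_add] at hzy hzx
  refine ⟨(G ^ (m : ℤ)) z, fun i hi => ?_, fun i hi => ?_⟩
  · simpa only [← Equiv.Perm.mul_apply, ← zpow_add, add_neg_cancel_right] using
      hzy (i + m) (by lia)
  · simpa only [← Equiv.Perm.mul_apply, ← zpow_add, add_neg_cancel_right] using
      hzx (i + m) (by lia)

end OrbitRelations

section MetricQuotients

theorem zpow_apply_of_semiconj {Z X : Type*} {G : Equiv.Perm Z} {F : Equiv.Perm X} {π : Z → X}
    (hF : ∀ z, F (π z) = π (G z)) (n : ℤ) (z : Z) :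
    (F ^ n) (π z) = π ((G ^ n) z) :=
  zpow_apply_of_succ (g := fun n => π ((G ^ n) z))
    (fun n => by rw [hF, add_comm, zpow_one_add, Equiv.Perm.mul_apply]) n

variable {Z X : Type*} [MetricSpace X] {G : Equiv.Perm Z} {E : Z → Z → Prop} {π : Z → X}
  {F : Equiv.Perm X}

/-- `π` is the quotient of `Z` by the relation of being `E`-related at all times, and the metric of
`X` induces the uniformity with base `OrbitClose G E n`. -/
structure IsMetricQuotient (G : Equiv.Perm Z) (E : Z → Z → Prop) (π : Z → X) : Prop where
  surj : Function.Surjective π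
  exists_dist_lt : ∀ ε > 0, ∃ n, ∀ x y, OrbitClose G E n x y → dist (π x) (π y) < ε
  exists_orbitClose : ∀ n, ∃ δ > 0, ∀ x y, dist (π x) (π y) < δ → OrbitClose G E n x y

theorem exists_pseudoMetricSpace_hasBasis {V : ℕ → Z → Z → Prop} (hrefl : ∀ n x, V n x x)
    (hsymm : ∀ n x y, V n x y → V n y x) (hanti : ∀ {m n}, m ≤ n → ∀ x y, V n x y → V m x y)
    (hcomp : ∀ n, ∃ m, ∀ x y z, V m x y → V m y z → V n x z) :
    ∃ _ : PseudoMetricSpace Z,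
      (uniformity Z).HasBasis (fun _ : ℕ => True) fun n => {p | V n p.1 p.2} := by
  have hbasis : IsBasis (fun _ : ℕ => True) fun n => {p : Z × Z | V n p.1 p.2} :=
    { nonempty := ⟨0, trivial⟩
      inter := fun {m n} _ _ => ⟨max m n, trivial, fun p hp =>
        ⟨hanti (le_max_left m n) _ _ hp, hanti (le_max_right m n) _ _ hp⟩⟩ }
  have hB : ∀ s ∈ hbasis.filterBasis, ∃ n, {p : Z × Z | V n p.1 p.2} = s :=
    fun s ⟨n, _, hs⟩ => ⟨n, hs⟩
  let _ : UniformSpace Z := .ofCore <| .mkOfBasis hbasis.filterBasis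
    (fun s hs x => by obtain ⟨n, rfl⟩ := hB s hs; exact hrefl n x)
    (fun s hs => by obtain ⟨n, rfl⟩ := hB s hs; exact ⟨_, hs, fun p => hsymm n p.1 p.2⟩)
    (fun s hs => by
      obtain ⟨n, rfl⟩ := hB s hs
      obtain ⟨m, hm⟩ := hcomp n
      exact ⟨{p | V m p.1 p.2}, ⟨m, trivial, rfl⟩, fun p ⟨y, hxy, hyz⟩ => hm _ y _ hxy hyz⟩)
  have hb : (uniformity Z).HasBasis (fun _ : ℕ => True) fun n => {p | V n p.1 p.2} :=
    hbasis.hasBasis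
  have := hb.isCountablyGenerated
  exact ⟨UniformSpace.pseudoMetricSpace Z, hb⟩

theorem IsGenerating.exists_isMetricQuotient.{u} {Z : Type u} {G : Equiv.Perm Z} {E : Z → Z → Prop}
    (h : IsGenerating G E) : ∃ (X : Type u) (_ : MetricSpace X) (π : Z → X),
      IsMetricQuotient G E π := by
  obtain ⟨_, hb⟩ := exists_pseudoMetricSpace_hasBasis (V := OrbitClose G E)
    (fun n x i _ => h.refl _) (fun n x y hxy i hi => h.symm (hxy i hi))
    (fun hmn x y hxy => hxy.mono hmn) fun n => by
      obtain ⟨m, -, hm⟩ := h.exists_orbitClose_of_comp n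
      exact ⟨m, fun x y z hxy hyz => hm x z fun i hi => ⟨_, hxy i hi, hyz i hi⟩⟩
  have hd := Metric.uniformity_basis_dist (α := Z)
  refine ⟨SeparationQuotient Z, inferInstance, SeparationQuotient.mk,
    SeparationQuotient.surjective_mk, fun ε hε => ?_, fun n => ?_⟩
  · obtain ⟨n, -, hn⟩ := hb.mem_iff.1 (hd.mem_of_mem hε)
    exact ⟨n, fun x y hxy => hn (show (x, y) ∈ {p : Z × Z | OrbitClose G E n p.1 p.2} from hxy)⟩
  · obtain ⟨δ, hδ, hn⟩ := hd.mem_iff.1 (hb.mem_of_mem (i := n) trivial)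
    exact ⟨δ, hδ, fun x y hxy => hn (show (x, y) ∈ {p : Z × Z | dist p.1 p.2 < δ} from hxy)⟩

theorem IsMetricQuotient.eq_iff (h : IsMetricQuotient G E π) {x y : Z} :
    π x = π y ↔ ∀ i : ℤ, E ((G ^ i) x) ((G ^ i) y) := by
  refine ⟨fun hxy i => ?_, fun hxy => eq_of_forall_dist_le fun ε hε => ?_⟩
  · obtain ⟨δ, hδ, hn⟩ := h.exists_orbitClose i.natAbs
    exact hn x y (by rwa [hxy, dist_self]) i le_rfl
  · obtain ⟨n, hn⟩ := h.exists_dist_lt ε hε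
    exact (hn x y fun i _ => hxy i).le

theorem IsMetricQuotient.exists_rel_of_dist_lt (h : IsMetricQuotient G E π) :
    ∃ δ > 0, ∀ x y, dist (π x) (π y) < δ → E x y := by
  obtain ⟨δ, hδ, hE⟩ := h.exists_orbitClose 0
  exact ⟨δ, hδ, fun x y hxy => hE x y hxy 0 le_rfl⟩

theorem IsMetricQuotient.exists_lift {W : Type*} [MetricSpace W] (h : IsMetricQuotient G E π)
    {H : Z → W} (hH : ∀ ε > 0, ∃ n, ∀ x y, OrbitClose G E n x y → dist (H x) (H y) < ε) :
    ∃ g : X → W, Continuous g ∧ ∀ z, g (π z) = H z := by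
  have hg : ∀ z, H (Function.surjInv h.surj (π z)) = H z := fun z =>
    eq_of_forall_dist_le fun ε hε =>
      have ⟨_, hn⟩ := hH ε hε
      (hn _ _ fun i _ => h.eq_iff.1 (Function.surjInv_eq h.surj _) i).le
  refine ⟨fun p => H (Function.surjInv h.surj p), Metric.continuous_iff.2 fun q ε hε => ?_, hg⟩
  obtain ⟨n, hn⟩ := hH ε hε
  obtain ⟨δ, hδ, hδn⟩ := h.exists_orbitClose n
  refine ⟨δ, hδ, fun p hpq => ?_⟩
  obtain ⟨x, rfl⟩ := h.surj p
  obtain ⟨y, rfl⟩ := h.surj q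
  rw [hg, hg]
  exact hn x y (hδn x y hpq)

theorem IsMetricQuotient.exists_perm (h : IsMetricQuotient G E π) :
    ∃ F : Equiv.Perm X, Continuous F ∧ Continuous F.symm ∧ ∀ z, F (π z) = π (G z) := by
  have hlift : ∀ k : ℤ, ∃ g : X → X, Continuous g ∧ ∀ z, g (π z) = π ((G ^ k) z) := fun k => by
    refine h.exists_lift fun ε hε => ?_
    obtain ⟨n, hn⟩ := h.exists_dist_lt ε hε
    refine ⟨n + k.natAbs, fun x y hxy => hn _ _ fun i hi => ?_⟩
    simpa only [← Equiv.Perm.mul_apply, ← zpow_add] using hxy (i + k) (by lia)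
  obtain ⟨g, hgc, hg⟩ := hlift 1
  obtain ⟨g', hgc', hg'⟩ := hlift (-1)
  refine ⟨⟨g, g', h.surj.forall.2 fun z => ?_, h.surj.forall.2 fun z => ?_⟩, hgc, hgc', hg⟩ <;>
    simp only [hg, hg', ← Equiv.Perm.mul_apply, ← zpow_add, add_neg_cancel, neg_add_cancel,
      zpow_zero, Equiv.Perm.one_apply]

theorem IsMetricQuotient.exists_expansive (h : IsMetricQuotient G E π)
    (hF : ∀ z, F (π z) = π (G z)) : ∃ c > 0, Expansive F c := by
  obtain ⟨δ, hδ, hE⟩ := h.exists_rel_of_dist_lt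
  refine ⟨δ / 2, by positivity, h.surj.forall₂.2 fun x y hxy => ?_⟩
  contrapose! hxy
  refine h.eq_iff.2 fun i => hE _ _ ?_
  rw [← zpow_apply_of_semiconj hF, ← zpow_apply_of_semiconj hF]
  exact (hxy i).trans_lt (half_lt_self hδ)

theorem _root_.Expansive.subsingleton_inter {c ε : ℝ} (hc : Expansive F c) (hε : ε ≤ c / 2)
    (p q : X) : (Ws F ε p ∩ Wu F ε q).Subsingleton := by
  rintro w ⟨hwp, hwq⟩ z ⟨hzp, hzq⟩
  refine hc.eq_of_forall_dist_le fun i => ?_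
  obtain ⟨k, rfl | rfl⟩ := i.eq_nat_or_neg
  · linarith [hwp k, hzp k, dist_triangle_left ((F ^ (k : ℤ)) w) ((F ^ (k : ℤ)) z)
      ((F ^ (k : ℤ)) p)]
  · linarith [hwq k, hzq k, dist_triangle_left ((F ^ (-k : ℤ)) w) ((F ^ (-k : ℤ)) z)
      ((F ^ (-k : ℤ)) q)]

theorem IsMetricQuotient.exists_inter_nonempty (h : IsMetricQuotient G E π)
    (hE : IsGenerating G E) (hb : HasBrackets G E) (hF : ∀ z, F (π z) = π (G z)) {ε : ℝ}
    (hε : 0 < ε) : ∃ δ > 0, ∀ p q, dist p q < δ → (Ws F ε p ∩ Wu F ε q).Nonempty := by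
  obtain ⟨n, hn⟩ := h.exists_dist_lt ε hε
  obtain ⟨m, hmn, hm⟩ := hE.exists_orbitClose_of_comp n
  obtain ⟨M, hM⟩ := hb.exists_bracket
  obtain ⟨δ, hδ, hδE⟩ := h.exists_orbitClose (m + M)
  refine ⟨δ, hδ, h.surj.forall₂.2 fun x y hxy => ?_⟩
  have hxy' := hδE x y hxy
  obtain ⟨z, hzy, hzx⟩ := hM m x y hxy'
  refine ⟨π z, fun k => ?_, fun k => ?_⟩
  · rw [zpow_apply_of_semiconj hF, zpow_apply_of_semiconj hF]
    refine hn _ _ fun i hi => ?_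
    simpa only [← Equiv.Perm.mul_apply, ← zpow_add] using hE.symm (hzx (i + k) (by lia))
  · rw [zpow_apply_of_semiconj hF, zpow_apply_of_semiconj hF]
    refine hn _ _ (hm _ _ fun i hi => ?_)
    simp only [← Equiv.Perm.mul_apply, ← zpow_add]
    rcases le_total (i + -k) (-m) with hik | hik
    · exact ⟨_, hE.refl _, hE.symm (hzy _ hik)⟩
    · exact ⟨_, hE.symm (hxy' _ (by lia)), hE.symm (hzx _ hik)⟩

theorem IsMetricQuotient.isSmale (h : IsMetricQuotient G E π) (hE : IsGenerating G E)
    (hb : HasBrackets G E) (hFc : Continuous F) (hFc' : Continuous F.symm)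
    (hF : ∀ z, F (π z) = π (G z)) : IsSmale F := by
  obtain ⟨c, hc, hexp⟩ := h.exists_expansive hF
  refine ⟨hFc, hFc', ⟨c, hc, hexp⟩, c / 2, half_pos hc, fun ε hε hεc => ?_⟩
  obtain ⟨δ, hδ, hne⟩ := h.exists_inter_nonempty hE hb hF hε
  refine ⟨δ, hδ, fun p q hpq => ?_⟩
  obtain ⟨w, hw⟩ := hne p q hpq
  exact ⟨w, hw, fun z hz => hexp.subsingleton_inter hεc p q hz hw⟩

theorem IsMetricQuotient.eventually_of_mem_unstableSet (h : IsMetricQuotient G E π)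
    (hF : ∀ z, F (π z) = π (G z)) {p : X} {x y : Z} (hx : π x ∈ unstableSet F p)
    (hy : π y ∈ unstableSet F p) : ∀ᶠ n : ℕ in atTop, E ((G ^ (-n : ℤ)) x) ((G ^ (-n : ℤ)) y) := by
  obtain ⟨δ, hδ, hE⟩ := h.exists_rel_of_dist_lt
  filter_upwards [hx.eventually_lt_const (half_pos hδ), hy.eventually_lt_const (half_pos hδ)]
    with n hxn hyn
  refine hE _ _ ?_
  rw [← zpow_apply_of_semiconj hF, ← zpow_apply_of_semiconj hF]
  linarith [dist_triangle_left ((F ^ (-n : ℤ)) (π x)) ((F ^ (-n : ℤ)) (π y)) ((F ^ (-n : ℤ)) p)]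

end MetricQuotients

section PathSpaces

variable {A : Type*} {T : A → A → Prop}

/-- The vertex shift of `T`, as a type: the bi-infinite paths of `T`. -/
abbrev PathSpace (T : A → A → Prop) : Type _ :=
  {t : ℤ → A // IsPath T t}

theorem isPath_shiftE_iff {t : ℤ → A} : IsPath T (shiftE A t) ↔ IsPath T t :=
  (Equiv.addRight (1 : ℤ)).forall_congr_right (q := fun i => T (t i) (t (i + 1)))

/-- The shift on the space of paths of `T`. -/
def pathShift (T : A → A → Prop) : Equiv.Perm (PathSpace T) :=
  (shiftE A).subtypePerm fun _ => isPath_shiftE_iff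

theorem pathShift_zpow_apply (n : ℤ) (x : PathSpace T) (i : ℤ) :
    ((pathShift T ^ n) x).1 i = x.1 (i + n) := by
  have h := zpow_apply_of_succ (f := shiftE A) (g := fun n k => x.1 (k + n))
    (fun n => (shiftE_apply_add x.1 n).symm) n
  simp only [add_zero] at h
  rw [pathShift, Equiv.Perm.subtypePerm_zpow]
  exact congrFun h i

end PathSpaces

section LeafShifts

variable {A X Y : Type*} [PseudoMetricSpace A] [MetricSpace X] [MetricSpace Y]
  {T : A → A → Prop} {M : ℕ} {f : Equiv.Perm Y} {φ : (ℤ → A) → Y} {F : Equiv.Perm X}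
  {π : PathSpace (LeafStep T) → X}

/-- Leaf closeness of two paths of marked letters at time `0`. -/
def LeafCloseAtZero (x y : PathSpace (LeafStep T)) : Prop :=
  LeafClose (x.1 0) (y.1 0)

theorem leafCloseAtZero_zpow_iff {x y : PathSpace (LeafStep T)} {i : ℤ} :
    LeafCloseAtZero ((pathShift (LeafStep T) ^ i) x) ((pathShift (LeafStep T) ^ i) y) ↔
      LeafClose (x.1 i) (y.1 i) := by
  simp only [LeafCloseAtZero, pathShift_zpow_apply, zero_add]

theorem IsAdapted.isGenerating [Finite A] (h : IsAdapted T M) :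
    IsGenerating (pathShift (LeafStep T)) LeafCloseAtZero where
  refl _ := .refl _
  symm := LeafClose.symm
  exists_of_comp := by
    obtain ⟨n, hn⟩ := h.exists_window_leafClose
    refine ⟨n, fun x y hxy => hn x.1 y.1 x.2 y.2 fun i hi => ?_⟩
    obtain ⟨w, hxw, hwy⟩ := hxy i hi
    refine ⟨w.1 0, ?_, ?_⟩
    · simpa only [LeafCloseAtZero, pathShift_zpow_apply, zero_add] using hxw
    · simpa only [LeafCloseAtZero, pathShift_zpow_apply, zero_add] using hwy

theorem IsAdapted.hasBrackets (h : IsAdapted T M) :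
    HasBrackets (pathShift (LeafStep T)) LeafCloseAtZero := by
  refine ⟨M, fun x y hxy => ?_⟩
  obtain ⟨z, hz, hzy, hzx⟩ := h.exists_bracket (s := 0) x.2 y.2 fun i hi hi' =>
    leafCloseAtZero_zpow_iff.1 (hxy i (by lia))
  exact ⟨⟨z, hz⟩, fun i hi => leafCloseAtZero_zpow_iff.2 (hzy i hi),
    fun i hi => leafCloseAtZero_zpow_iff.2 (hzx i hi)⟩

theorem IsPresentation.exists_isFactorMap [Finite A] (h : IsPresentation f T φ)
    (hπ : IsMetricQuotient (pathShift (LeafStep T)) LeafCloseAtZero π)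
    (hF : ∀ x, F (π x) = π (pathShift (LeafStep T) x)) :
    ∃ β : X → Y, IsFactorMap F f β ∧ ∀ x, β (π x) = φ fun i => (x.1 i).pt := by
  obtain ⟨β, hβ, hβπ⟩ := hπ.exists_lift (H := fun x => φ fun i => (x.1 i).pt) fun ε hε => by
    obtain ⟨n, hn⟩ := h.continuity ε hε
    exact ⟨n, fun x y hxy => hn _ _ x.2.pt y.2.pt fun i hi =>
      (leafCloseAtZero_zpow_iff.1 (hxy i hi)).dist_le.trans (by norm_num)⟩
  refine ⟨β, ⟨hβ, fun y => ?_, hπ.surj.forall.2 fun x => ?_⟩, hβπ⟩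
  · obtain ⟨t, ht, rfl⟩ := h.surj y
    obtain ⟨x, hx, hxt⟩ := exists_isPath_leafStep ht
    exact ⟨π ⟨x, hx⟩, (hβπ _).trans (congrArg φ (funext hxt))⟩
  · rw [hF, hβπ, hβπ]
    exact h.semiconj x.2.pt

theorem IsPresentation.uResolving (h : IsPresentation f T φ) (hT : IsAdapted T M)
    (hπ : IsMetricQuotient (pathShift (LeafStep T)) LeafCloseAtZero π)
    (hF : ∀ x, F (π x) = π (pathShift (LeafStep T) x)) {β : X → Y}
    (hβ : ∀ x, β (π x) = φ fun i => (x.1 i).pt) : UResolving F β := by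
  refine fun p => fun q hq q' hq' hqq' => ?_
  obtain ⟨x, rfl⟩ := hπ.surj q
  obtain ⟨y, rfl⟩ := hπ.surj q'
  rw [hβ, hβ] at hqq'
  have hev : ∀ᶠ n : ℕ in atTop, LeafClose (x.1 (-n)) (y.1 (-n)) :=
    (hπ.eventually_of_mem_unstableSet hF hq hq').mono fun n => leafCloseAtZero_zpow_iff.1
  have hfreq : ∃ᶠ m in atBot, Relation.Comp LeafClose LeafClose (x.1 m) (y.1 m) :=
    (tendsto_neg_atTop_atBot.comp tendsto_natCast_atTop_atTop).frequently
      (hev.mono fun n hn => ⟨_, hn, .refl _⟩).frequently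
  refine hπ.eq_iff.2 fun i => leafCloseAtZero_zpow_iff.2 ?_
  exact hT.leafClose_of_frequently_comp x.2 y.2
    (fun i => (h.dist_le_one x.2.pt y.2.pt hqq' i).trans (by norm_num)) hfreq i

end LeafShifts

section Codings

variable {A B X : Type*} {R : B → B → Prop}

theorem isSFT_setOf_isPath [Finite B] : IsSFT {t | IsPath R t} := by
  refine ⟨(fun p : B × B => ⟨2, ![p.1, p.2]⟩) '' {p | ¬ R p.1 p.2}, (toFinite _).image _, ?_⟩
  ext t
  simp only [mem_ofPred_eq, forall_mem_image, Prod.forall, OccursIn, Fin.forall_fin_two,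
    Fin.val_zero, Fin.val_one, Nat.cast_zero, Nat.cast_one, add_zero, Matrix.cons_val_zero,
    Matrix.cons_val_one]
  exact ⟨fun ht a b hab ⟨i, ha, hb⟩ => hab (ha ▸ hb ▸ ht i),
    fun ht i => by_contra fun hR => ht _ _ hR ⟨i, rfl, rfl⟩⟩

theorem shiftInvariant_setOf_isPath : ShiftInvariant {t | IsPath R t} :=
  ⟨fun _ => isPath_shiftE_iff.2, fun _ ht =>
    isPath_shiftE_iff.1 (by rwa [Equiv.apply_symm_apply])⟩

theorem exists_isSubshiftFactorMap_of_pathSpace [Finite B] [MetricSpace X] [Nonempty X]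
    {F : Equiv.Perm X} {π : PathSpace R → X} (hπ : Function.Surjective π)
    (hF : ∀ x, F (π x) = π (pathShift R x))
    (hcont : ∀ ε > 0, ∃ n : ℕ, ∀ x y, (∀ i : ℤ, i.natAbs ≤ n → x.1 i = y.1 i) →
      dist (π x) (π y) < ε)
    (hinj : ∀ x y, π x = π y → (∀ᶠ i in atTop, x.1 i = y.1 i) → x = y) :
    ∃ (N : ℕ) (S : Set (ℤ → Fin N)) (α : (ℤ → Fin N) → X), IsSFT S ∧ ShiftInvariant S ∧
      IsSubshiftFactorMap S F α ∧ ∀ t ∈ S, InjOn α (shiftStable S t) := by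
  obtain ⟨N, ⟨e⟩⟩ := Finite.exists_equiv_fin B
  let S : Set (ℤ → Fin N) := {s | IsPath (fun a b => R (e.symm a) (e.symm b)) s}
  let path : S → PathSpace R := fun s => ⟨fun i => e.symm (s.1 i), s.2⟩
  obtain ⟨α, hα⟩ : ∃ α : (ℤ → Fin N) → X, ∀ s : S, α s = π (path s) :=
    ⟨Function.extend Subtype.val (π ∘ path) fun _ => Classical.arbitrary X,
      Subtype.val_injective.extend_apply _ _⟩
  have hS : ShiftInvariant S := shiftInvariant_setOf_isPath
  refine ⟨N, S, α, isSFT_setOf_isPath, hS, ⟨?_, ?_, fun s hs => ?_⟩, ?_⟩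
  · refine continuousOn_of_exists_window fun ε hε => ?_
    obtain ⟨n, hn⟩ := hcont ε hε
    refine ⟨n, fun s hs s' hs' hss' => ?_⟩
    rw [hα ⟨s, hs⟩, hα ⟨s', hs'⟩]
    exact hn _ _ fun i hi => congrArg e.symm (hss' i hi)
  · refine eq_univ_of_forall (hπ.forall.2 fun x => ?_)
    have hx : (fun i => e (x.1 i)) ∈ S := fun i => by
      simpa only [e.symm_apply_apply] using x.2 i
    refine ⟨_, hx, (hα ⟨_, hx⟩).trans (congrArg π (Subtype.ext (funext fun i => ?_)))⟩
    exact e.symm_apply_apply _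
  · rw [hα ⟨s, hs⟩, hα ⟨_, hS.1 s hs⟩, hF]
    rfl
  · rintro t - s ⟨hs, n, hn⟩ s' ⟨hs', n', hn'⟩ hss'
    rw [hα ⟨s, hs⟩, hα ⟨s', hs'⟩] at hss'
    have hpath := hinj _ _ hss' <| by
      filter_upwards [eventually_ge_atTop n, eventually_ge_atTop n'] with i hi hi'
      exact congrArg e.symm ((hn i hi).trans (hn' i hi').symm)
    exact funext fun i => e.symm.injective (congrFun (congrArg Subtype.val hpath) i)

theorem IsAdapted.exists_isSubshiftFactorMap [Finite A] [PseudoMetricSpace A] [MetricSpace X]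
    [Nonempty X] {T : A → A → Prop} {M : ℕ} {F : Equiv.Perm X} {π : PathSpace (LeafStep T) → X}
    (h : IsAdapted T M) (hπ : IsMetricQuotient (pathShift (LeafStep T)) LeafCloseAtZero π)
    (hF : ∀ x, F (π x) = π (pathShift (LeafStep T) x)) :
    ∃ (N : ℕ) (S : Set (ℤ → Fin N)) (α : (ℤ → Fin N) → X), IsSFT S ∧ ShiftInvariant S ∧
      IsSubshiftFactorMap S F α ∧ ∀ t ∈ S, InjOn α (shiftStable S t) := by
  refine exists_isSubshiftFactorMap_of_pathSpace hπ.surj hF (fun ε hε => ?_) fun x y hxy hev => ?_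
  · obtain ⟨n, hn⟩ := hπ.exists_dist_lt ε hε
    exact ⟨n, fun x y hxy => hn x y fun i hi =>
      leafCloseAtZero_zpow_iff.2 (hxy i hi ▸ LeafClose.refl _)⟩
  · exact Subtype.ext <| h.eq_of_leafClose x.2 y.2
      (fun i => leafCloseAtZero_zpow_iff.1 (hπ.eq_iff.1 hxy i)) hev

end Codings

end SmaleCover

open SmaleCover in
theorem stmt13_general {Y : Type*} [MetricSpace Y] (f : Equiv.Perm Y) (hY : FinitelyPresented f) :
    ∃ (N : ℕ) (S : Set (ℤ → Fin N)) (X : Type) (_ : MetricSpace X) (_ : CompactSpace X)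
      (F : Equiv.Perm X) (α : (ℤ → Fin N) → X) (β : X → Y),
      IsSFT S ∧ ShiftInvariant S ∧ S.Nonempty ∧ IsSmale F ∧
      IsSubshiftFactorMap S F α ∧ (∀ t ∈ S, Set.InjOn α (shiftStable S t)) ∧
      IsFactorMap F f β ∧ UResolving F β := by
  obtain ⟨y⟩ : Nonempty Y :=
    have ⟨_, _, _, _, _, _, _, ⟨s, _⟩, φ, _⟩ := hY
    ⟨φ s⟩
  obtain ⟨A, _, _, T₀, φ₀, h₀⟩ := exists_isPresentation hY
  obtain ⟨B, _, _, T, φ, M, h, hT⟩ := h₀.exists_isAdapted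
  obtain ⟨X, _, π, hπ⟩ := hT.isGenerating.exists_isMetricQuotient
  obtain ⟨F, hFc, hFc', hF⟩ := hπ.exists_perm
  obtain ⟨β, hβ, hβπ⟩ := h.exists_isFactorMap hπ hF
  obtain ⟨x, -⟩ := hβ.2.1 y
  have : Nonempty X := ⟨x⟩
  obtain ⟨N, S, α, hS, hSinv, hα, hαinj⟩ := hT.exists_isSubshiftFactorMap hπ hF
  have hSne : S.Nonempty := image_nonempty.1 (hα.2.1 ▸ univ_nonempty)
  exact ⟨N, S, X, _, hα.compactSpace hS, F, α, β, hS, hSinv, hSne,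
    hπ.isSmale hT.isGenerating hT.hasBrackets hFc hFc' hF, hα, hαinj, hβ,
    h.uResolving hT hπ hF hβπ⟩

/-- For a transitive finitely presented system `(Y,f)` there exist an SFT
`(Σ,σ)`, a Smale space `(X,F)`, an s-resolving factor map `α : Σ → X` and a u-resolving
factor map `β : X → Y`. -/
theorem stmt13 {Y : Type} [MetricSpace Y] [CompactSpace Y] (f : Equiv.Perm Y)
    (hY : FinitelyPresented f) (hYt : TopTransitive f) :
    ∃ (N : ℕ) (S : Set (ℤ → Fin N)) (X : Type) (mX : MetricSpace X) (cX : CompactSpace X)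
      (F : Equiv.Perm X) (α : (ℤ → Fin N) → X) (β : X → Y),
      IsSFT S ∧ ShiftInvariant S ∧ S.Nonempty ∧ IsSmale F ∧
      IsSubshiftFactorMap S F α ∧ (∀ t ∈ S, Set.InjOn α (shiftStable S t)) ∧
      IsFactorMap F f β ∧ UResolving F β :=
  stmt13_general f hY
end

section
/- Let Σ be a transitive one-step SFT, (Y,f) a transitive Smale space, and φ : Σ → Y a finite-to-one factor map. If t, t' ∈ Σ satisfy φ(t) = φ(t') and t ∈ W^s(t'), then for some j ∈ ℤ the point φ(σʲ t') lies in the unstable t_j-boundary of R_{t'_j} and in the unstable t'_j-boundary of R_{t_j}, where R_i = φ(C_i) are the rectangles that are images of the 0-cylinders. -/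
open Filter Topology Set

/-- A rectangle: a closed set on which the bracket is everywhere defined. -/
def IsRectangle {Y : Type*} [MetricSpace Y] (f : Equiv.Perm Y) (ε : ℝ) (R : Set Y) : Prop :=
  IsClosed R ∧ ∀ x ∈ R, ∀ y ∈ R, (Ws f ε x ∩ Wu f ε y).Nonempty

/-- The unstable `Ra`-boundary of `Rb`: points of `Rb` that are limits of points of
`W^s_ε(x) ∩ Ra` lying outside `Rb`. -/
def UnstableBoundary {Y : Type*} [MetricSpace Y] (f : Equiv.Perm Y) (ε : ℝ)
    (Rb Ra : Set Y) : Set Y :=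
  {x | x ∈ Rb ∧ ∃ u : ℕ → Y, (∀ k, u k ∈ (Ws f ε x ∩ Ra) \ Rb) ∧
    Filter.Tendsto u Filter.atTop (nhds x)}

/-!
Shift so that `t` and `t'` differ at `0` but agree at `1`, and approximate `t` by periodic points
`s` of the subshift. Following `s` on the left and `t` on the right of `0` gives a point `w` with
`φ w` close to `φ t`, on the same local stable set and in `R_{t_0}`. If `φ w` also had a preimage
`r` with `r_0 = t'_0`, then following `r` on the left and `s` on the right, which is allowed since
`s_1 = t_1 = t'_1`, would give a point that by expansiveness has the same image as `s`, is forward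
asymptotic to `s`, but differs from `s` at `0`. Its translates by multiples of the period would be
infinitely many preimages of `φ s`, so `φ w` lies outside `R_{t'_0}`.
-/

theorem map_zpow_of_semiconj_on {X Y : Type*} {σ : Equiv.Perm X} {f : Equiv.Perm Y} {φ : X → Y}
    {S : Set X} (hσ : ∀ x ∈ S, ∀ j : ℤ, (σ ^ j) x ∈ S) (hφ : ∀ x ∈ S, φ (σ x) = f (φ x))
    {x : X} (hx : x ∈ S) (j : ℤ) : φ ((σ ^ j) x) = (f ^ j) (φ x) := by
  induction j using Int.induction_on with
  | zero => rfl
  | succ n ih =>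
    rw [add_comm, zpow_one_add, zpow_one_add, Equiv.Perm.mul_apply, Equiv.Perm.mul_apply,
      hφ _ (hσ x hx n), ih]
  | pred n ih =>
    apply f.injective
    rw [← hφ _ (hσ x hx _), ← Equiv.Perm.mul_apply, ← Equiv.Perm.mul_apply, ← zpow_one_add,
      ← zpow_one_add, add_sub_cancel, ih]

theorem Expansive.eq_of_forall_dist_le_s16 {X : Type*} [MetricSpace X] {f : Equiv.Perm X} {c : ℝ}
    (hf : Expansive f c) {x y : X} (h : ∀ n : ℤ, dist ((f ^ n) x) ((f ^ n) y) ≤ c) : x = y := by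
  by_contra hxy
  obtain ⟨n, hn⟩ := hf x y hxy
  exact hn.not_ge (h n)

section Sequences

variable {A : Type*}

theorem shiftE_zpow_apply (j : ℤ) (x : ℤ → A) (i : ℤ) : (shiftE A ^ j) x i = x (i + j) := by
  induction j using Int.induction_on generalizing x with
  | zero => simp
  | succ n ih =>
    rw [zpow_add_one, Equiv.Perm.mul_apply, ih, ← add_assoc]
    rfl
  | pred n ih =>
    rw [zpow_sub_one, Equiv.Perm.mul_apply, ih, ← add_sub_assoc]
    rfl

theorem shiftE_zpow_eq_of_periodic {x : ℤ → A} {p : ℤ} (hx : Function.Periodic x p) :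
    (shiftE A ^ p) x = x :=
  funext fun i => (shiftE_zpow_apply p x i).trans (hx i)

/-- The sequence that follows `p` up to coordinate `0` and `q` from coordinate `1` on. -/
def splice (p q : ℤ → A) : ℤ → A := fun i => if i ≤ 0 then p i else q i

theorem splice_of_nonpos (p q : ℤ → A) {i : ℤ} (hi : i ≤ 0) : splice p q i = p i :=
  if_pos hi

theorem splice_of_pos (p q : ℤ → A) {i : ℤ} (hi : 0 < i) : splice p q i = q i :=
  if_neg hi.not_ge

theorem splice_eqOn {p q : ℤ → A} {I : Set ℤ} (h : EqOn p q I) : EqOn (splice p q) q I := by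
  intro i hi
  rcases le_or_gt i 0 with hi0 | hi0
  · rw [splice_of_nonpos p q hi0, h hi]
  · exact splice_of_pos p q hi0

/-- The `p`-periodic sequence that repeats the block of `x` on the coordinates `0, …, p - 1`. -/
def periodize (p : ℤ) (x : ℤ → A) : ℤ → A := fun i => x (i % p)

theorem periodize_periodic (p : ℤ) (x : ℤ → A) : Function.Periodic (periodize p x) p :=
  fun i => congrArg x (Int.add_emod_right i p)

theorem periodize_apply_of_lt {p i : ℤ} (x : ℤ → A) (hi0 : 0 ≤ i) (hip : i < p) :
    periodize p x i = x i :=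
  congrArg x (Int.emod_eq_of_lt hi0 hip)

theorem periodize_add_one {p : ℤ} {x : ℤ → A} (hp : 0 < p) (hx : x p = x 0) (i : ℤ) :
    periodize p x (i + 1) = x (i % p + 1) := by
  change x ((i + 1) % p) = x (i % p + 1)
  rw [← Int.emod_add_emod]
  rcases (Int.add_one_le_of_lt (Int.emod_lt_of_pos i hp)).lt_or_eq with h | h
  · rw [Int.emod_eq_of_lt (Int.add_nonneg (Int.emod_nonneg i hp.ne') zero_le_one) h]
  · rw [h, Int.emod_self, hx]

theorem tendsto_of_forall_eqOn_Icc [TopologicalSpace A] {s : ℕ → ℤ → A} {a : ℤ → A}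
    (h : ∀ n : ℕ, EqOn (s n) a (Icc (-n) n)) : Tendsto s atTop (𝓝 a) := by
  refine tendsto_pi_nhds.2 fun i => tendsto_const_nhds.congr' ?_
  filter_upwards [eventually_ge_atTop i.natAbs] with n hn
  exact (h n ⟨by omega, by omega⟩).symm

theorem isOpen_setOf_eqOn [TopologicalSpace A] [DiscreteTopology A] (a : ℤ → A) {I : Set ℤ}
    (hI : I.Finite) : IsOpen {x : ℤ → A | EqOn x a I} :=
  isOpen_set_pi hI fun i _ => isOpen_discrete {a i}

end Sequences

namespace IsOneStepSFTFor

variable {A : Type*} {T : A → A → Prop} {S : Set (ℤ → A)}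

theorem mem_iff (hS : IsOneStepSFTFor T S) {x : ℤ → A} : x ∈ S ↔ ∀ i, T (x i) (x (i + 1)) :=
  Set.ext_iff.1 hS x

theorem shiftE_zpow_mem (hS : IsOneStepSFTFor T S) {x : ℤ → A} (hx : x ∈ S) (j : ℤ) :
    (shiftE A ^ j) x ∈ S := by
  refine hS.mem_iff.2 fun i => ?_
  rw [shiftE_zpow_apply, shiftE_zpow_apply, add_right_comm]
  exact hS.mem_iff.1 hx (i + j)

theorem splice_mem (hS : IsOneStepSFTFor T S) {p q : ℤ → A} (hp : p ∈ S) (hq : q ∈ S)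
    (hpq : T (p 0) (q 1)) : splice p q ∈ S := by
  refine hS.mem_iff.2 fun i => ?_
  rcases lt_trichotomy i 0 with hi | rfl | hi
  · rw [splice_of_nonpos p q hi.le, splice_of_nonpos p q hi]
    exact hS.mem_iff.1 hp i
  · rwa [splice_of_nonpos p q le_rfl, zero_add, splice_of_pos p q one_pos]
  · rw [splice_of_pos p q hi, splice_of_pos p q (hi.trans (lt_add_one i))]
    exact hS.mem_iff.1 hq i

theorem periodize_mem (hS : IsOneStepSFTFor T S) {x : ℤ → A} (hx : x ∈ S) {p : ℤ} (hp : 0 < p)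
    (hxp : x p = x 0) : periodize p x ∈ S := by
  refine hS.mem_iff.2 fun i => ?_
  rw [periodize_add_one hp hxp]
  exact hS.mem_iff.1 hx (i % p)

variable [TopologicalSpace A] [DiscreteTopology A]

theorem exists_periodic_eqOn_Icc_zero (hS : IsOneStepSFTFor T S) (hStrans : SubshiftTransitive S)
    {a : ℤ → A} (ha : a ∈ S) (n : ℕ) :
    ∃ s ∈ S, ∃ p > 0, Function.Periodic s p ∧ EqOn s a (Icc 0 n) := by
  have hU : IsOpen {x : ℤ → A | x (n + 1) = a 0} :=
    (isOpen_discrete {a 0}).preimage (continuous_apply (A := fun _ : ℤ => A) (n + 1 : ℤ))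
  have hUS : ({x : ℤ → A | x (n + 1) = a 0} ∩ S).Nonempty :=
    ⟨(shiftE A ^ (-(n + 1 : ℤ))) a, by simp [shiftE_zpow_apply], hS.shiftE_zpow_mem ha _⟩
  obtain ⟨m, x, ⟨hxU, hxV⟩, hxS⟩ :=
    hStrans _ _ hU (isOpen_setOf_eqOn a (finite_Icc 0 (n : ℤ))) hUS ⟨a, eqOn_refl a _, ha⟩
  have hreturn : x (n + 1 + m) = x 0 :=
    calc x (n + 1 + m) = (shiftE A ^ (m : ℤ)) x (n + 1) := (shiftE_zpow_apply _ _ _).symm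
      _ = a 0 := hxU
      _ = x 0 := (hxV ⟨le_rfl, Int.natCast_nonneg n⟩).symm
  have hp : (0 : ℤ) < n + 1 + m := by omega
  refine ⟨_, hS.periodize_mem hxS hp hreturn, _, hp, periodize_periodic _ x, fun i hi => ?_⟩
  rw [periodize_apply_of_lt x hi.1 (by linarith [hi.2]), hxV hi]

theorem exists_periodic_eqOn_Icc (hS : IsOneStepSFTFor T S) (hStrans : SubshiftTransitive S)
    {a : ℤ → A} (ha : a ∈ S) (n : ℕ) :
    ∃ s ∈ S, ∃ p > 0, Function.Periodic s p ∧ EqOn s a (Icc (-n) n) := by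
  obtain ⟨s, hsS, p, hp, hper, hsa⟩ :=
    hS.exists_periodic_eqOn_Icc_zero hStrans (hS.shiftE_zpow_mem ha (-n)) (2 * n)
  refine ⟨(shiftE A ^ (n : ℤ)) s, hS.shiftE_zpow_mem hsS n, p, hp, fun i => ?_, fun i hi => ?_⟩
  · rw [shiftE_zpow_apply, shiftE_zpow_apply, add_right_comm, hper]
  · rw [shiftE_zpow_apply, hsa ⟨by linarith [hi.1], by push_cast; linarith [hi.2]⟩,
      shiftE_zpow_apply, add_neg_cancel_right]

end IsOneStepSFTFor

/-- The cylinder `C_j` of those points of `S` that have the symbol `j` at coordinate `0`. -/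
def zeroCylinder {A : Type*} (S : Set (ℤ → A)) (j : A) : Set (ℤ → A) :=
  {s ∈ S | s 0 = j}

section Coding

variable {A Y : Type*} {T : A → A → Prop} {S : Set (ℤ → A)} {φ : (ℤ → A) → Y} {f : Equiv.Perm Y}

theorem infinite_fiber_of_periodic (hS : IsOneStepSFTFor T S)
    (hφ : ∀ x ∈ S, φ (shiftE A x) = f (φ x)) {s v : ℤ → A} {p : ℤ} (hs : s ∈ S) (hv : v ∈ S)
    (hp : 0 < p) (hper : Function.Periodic s p) (hvs : φ v = φ s) (hpos : ∀ i > 0, v i = s i)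
    (h0 : v 0 ≠ s 0) : (φ ⁻¹' {φ s} ∩ S).Infinite := by
  have hmap {x : ℤ → A} (hx : x ∈ S) (j : ℤ) : φ ((shiftE A ^ j) x) = (f ^ j) (φ x) :=
    map_zpow_of_semiconj_on (fun _ => hS.shiftE_zpow_mem) hφ hx j
  refine infinite_of_injective_forall_mem (f := fun k : ℕ => (shiftE A ^ (k * p)) v)
    (.of_lt_imp_ne fun k l hkl heq => h0 ?_) fun k => ⟨?_, hS.shiftE_zpow_mem hv _⟩
  · have hlp : 0 < (l - k : ℤ) * p := mul_pos (by omega) hp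
    have hcoord := congrFun heq (-(k * p))
    simp only [shiftE_zpow_apply, neg_add_cancel] at hcoord
    calc v 0 = v ((l - k : ℤ) * p) := by rw [hcoord]; congr 1; ring
      _ = s ((l - k : ℤ) * p) := hpos _ hlp
      _ = s 0 := hper.int_mul_eq _
  · change φ ((shiftE A ^ (k * p)) v) = φ s
    rw [hmap hv, hvs, ← hmap hs, shiftE_zpow_eq_of_periodic (hper.nat_mul k)]

variable [MetricSpace Y] {ε : ℝ}

theorem dist_zpow_map_lt (hS : IsOneStepSFTFor T S) (hφ : ∀ x ∈ S, φ (shiftE A x) = f (φ x))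
    (hsmall : ∀ x ∈ S, ∀ y ∈ S, x 0 = y 0 → dist (φ x) (φ y) < ε) {x y : ℤ → A} (hx : x ∈ S)
    (hy : y ∈ S) {k : ℤ} (hk : x k = y k) : dist ((f ^ k) (φ x)) ((f ^ k) (φ y)) < ε := by
  have hσ : ∀ x ∈ S, ∀ j : ℤ, (shiftE A ^ j) x ∈ S := fun _ => hS.shiftE_zpow_mem
  rw [← map_zpow_of_semiconj_on hσ hφ hx, ← map_zpow_of_semiconj_on hσ hφ hy]
  exact hsmall _ (hσ x hx k) _ (hσ y hy k) (by simpa only [shiftE_zpow_apply, zero_add] using hk)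

theorem map_splice_eq (hS : IsOneStepSFTFor T S) (hφ : ∀ x ∈ S, φ (shiftE A x) = f (φ x))
    (hsmall : ∀ x ∈ S, ∀ y ∈ S, x 0 = y 0 → dist (φ x) (φ y) < ε) {c : ℝ} (hexp : Expansive f c)
    (hε : ε ≤ c / 2) {r s w : ℤ → A} (hr : r ∈ S) (hs : s ∈ S) (hw : w ∈ S)
    (hrs : T (r 0) (s 1)) (hrw : φ r = φ w) (hws : ∀ i ≤ 0, w i = s i) :
    φ (splice r s) = φ s := by
  have hv : splice r s ∈ S := hS.splice_mem hr hs hrs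
  refine hexp.eq_of_forall_dist_le_s16 fun k => ?_
  rcases le_or_gt k 0 with hk | hk
  · have hleft : dist ((f ^ k) (φ (splice r s))) ((f ^ k) (φ w)) < ε :=
      hrw ▸ dist_zpow_map_lt hS hφ hsmall hv hr (splice_of_nonpos r s hk)
    have hright : dist ((f ^ k) (φ w)) ((f ^ k) (φ s)) < ε :=
      dist_zpow_map_lt hS hφ hsmall hw hs (hws k hk)
    linarith [dist_triangle ((f ^ k) (φ (splice r s))) ((f ^ k) (φ w)) ((f ^ k) (φ s))]
  · have hright : dist ((f ^ k) (φ (splice r s))) ((f ^ k) (φ s)) < ε :=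
      dist_zpow_map_lt hS hφ hsmall hv hs (splice_of_pos r s hk)
    linarith [dist_nonneg.trans_lt hright]

theorem map_notMem_image_zeroCylinder_of_periodic (hS : IsOneStepSFTFor T S)
    (hφ : ∀ x ∈ S, φ (shiftE A x) = f (φ x))
    (hsmall : ∀ x ∈ S, ∀ y ∈ S, x 0 = y 0 → dist (φ x) (φ y) < ε) {c : ℝ} (hexp : Expansive f c)
    (hε : ε ≤ c / 2) {s w : ℤ → A} {p : ℤ} {b : A} (hs : s ∈ S) (hw : w ∈ S)
    (hfin : (φ ⁻¹' {φ s} ∩ S).Finite) (hp : 0 < p) (hper : Function.Periodic s p)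
    (hws : ∀ i ≤ 0, w i = s i) (hT : T b (s 1)) (hb : b ≠ s 0) :
    φ w ∉ φ '' zeroCylinder S b := by
  rintro ⟨r, ⟨hr, rfl⟩, hrw⟩
  refine infinite_fiber_of_periodic hS hφ hs (hS.splice_mem hr hs hT) hp hper
    (map_splice_eq hS hφ hsmall hexp hε hr hs hw hT hrw hws) (fun i => splice_of_pos r s) ?_ hfin
  rwa [splice_of_nonpos r s le_rfl]

theorem map_mem_unstableBoundary [TopologicalSpace A] [DiscreteTopology A]
    (hS : IsOneStepSFTFor T S) (hStrans : SubshiftTransitive S) (hcont : ContinuousOn φ S)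
    (hφ : ∀ x ∈ S, φ (shiftE A x) = f (φ x)) (hfin : ∀ y, (φ ⁻¹' {y} ∩ S).Finite)
    (hsmall : ∀ x ∈ S, ∀ y ∈ S, x 0 = y 0 → dist (φ x) (φ y) < ε) {c : ℝ} (hexp : Expansive f c)
    (hε : ε ≤ c / 2) {a a' : ℤ → A} (ha : a ∈ S) (ha' : a' ∈ S) (heq : φ a = φ a')
    (h0 : a 0 ≠ a' 0) (h1 : a 1 = a' 1) :
    φ a ∈ UnstableBoundary f ε (φ '' zeroCylinder S (a' 0)) (φ '' zeroCylinder S (a 0)) := by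
  choose s hs p hp hper hsa using fun n : ℕ => hS.exists_periodic_eqOn_Icc hStrans ha (n + 1)
  have hs0 (n : ℕ) : s n 0 = a 0 := hsa n ⟨by omega, by omega⟩
  have hs1 (n : ℕ) : s n 1 = a 1 := hsa n ⟨by omega, by omega⟩
  have hw0 (n : ℕ) : splice (s n) a 0 = a 0 := (splice_of_nonpos _ _ le_rfl).trans (hs0 n)
  have hw (n : ℕ) : splice (s n) a ∈ S :=
    hS.splice_mem (hs n) ha (by simpa only [hs0, zero_add] using hS.mem_iff.1 ha 0)
  refine ⟨⟨a', ⟨ha', rfl⟩, heq.symm⟩, fun n => φ (splice (s n) a),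
    fun n => ⟨⟨fun k => ?_, mem_image_of_mem φ ⟨hw n, hw0 n⟩⟩, ?_⟩, ?_⟩
  · apply dist_zpow_map_lt hS hφ hsmall ha (hw n)
    rcases k.eq_zero_or_pos with rfl | hk
    · exact (hw0 n).symm
    · exact (splice_of_pos _ _ (Int.natCast_pos.2 hk)).symm
  · refine map_notMem_image_zeroCylinder_of_periodic hS hφ hsmall hexp hε (hs n) (hw n) (hfin _)
      (hp n) (hper n) (fun i => splice_of_nonpos (s n) a) ?_ ((hs0 n).symm ▸ h0.symm)
    simpa only [hs1, h1, zero_add] using hS.mem_iff.1 ha' 0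
  · have hlim : Tendsto (fun n => splice (s n) a) atTop (𝓝 a) :=
      tendsto_of_forall_eqOn_Icc fun n =>
        splice_eqOn ((hsa n).mono (Icc_subset_Icc (by omega) (by omega)))
    exact (hcont a ha).tendsto.comp (tendsto_nhdsWithin_iff.2 ⟨hlim, .of_forall hw⟩)

theorem exists_ne_and_eq_add_one_of_mem_shiftStable {t t' : ℤ → A} (hst : t ∈ shiftStable S t')
    (htne : t ≠ t') : ∃ j, t j ≠ t' j ∧ t (j + 1) = t' (j + 1) := by
  obtain ⟨-, M, hM⟩ := hst
  obtain ⟨j, hj, hmax⟩ := Int.exists_greatest_of_bdd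
    ⟨M, fun i hi => le_of_not_ge fun hMi => hi (hM i hMi)⟩ (Function.ne_iff.1 htne)
  exact ⟨j, hj, not_imp_comm.1 (hmax (j + 1)) (lt_add_one j).not_ge⟩

end Coding

theorem stmt16_general {Y : Type*} [MetricSpace Y] (f : Equiv.Perm Y) (c : ℝ)
    (hexp : Expansive f c) (ε : ℝ) (hε : ε ≤ c / 2) {A : Type*} [TopologicalSpace A]
    [DiscreteTopology A] (T : A → A → Prop) (S : Set (ℤ → A)) (hS : IsOneStepSFTFor T S)
    (hStrans : SubshiftTransitive S) (φ : (ℤ → A) → Y) (hcont : ContinuousOn φ S)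
    (hφ : ∀ x ∈ S, φ (shiftE A x) = f (φ x)) (hfin : ∀ y : Y, (φ ⁻¹' {y} ∩ S).Finite)
    (R : A → Set Y) (hR : ∀ j, R j = φ '' zeroCylinder S j)
    (hsmall : ∀ j, ∀ x ∈ R j, ∀ y ∈ R j, dist x y < ε) (t t' : ℤ → A) (ht : t ∈ S) (ht' : t' ∈ S)
    (heq : φ t = φ t') (j : ℤ) (hj : t j ≠ t' j) (hj1 : t (j + 1) = t' (j + 1)) :
    φ ((shiftE A ^ j) t') ∈
      UnstableBoundary f ε (R (t' j)) (R (t j)) ∩ UnstableBoundary f ε (R (t j)) (R (t' j)) := by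
  have hσ : ∀ x ∈ S, ∀ j : ℤ, (shiftE A ^ j) x ∈ S := fun _ => hS.shiftE_zpow_mem
  have heqj : φ ((shiftE A ^ j) t) = φ ((shiftE A ^ j) t') := by
    rw [map_zpow_of_semiconj_on hσ hφ ht, map_zpow_of_semiconj_on hσ hφ ht', heq]
  have hsmallS : ∀ x ∈ S, ∀ y ∈ S, x 0 = y 0 → dist (φ x) (φ y) < ε := fun x hx y hy hxy =>
    hsmall (y 0) _ (hR _ ▸ ⟨x, ⟨hx, hxy⟩, rfl⟩) _ (hR _ ▸ ⟨y, ⟨hy, rfl⟩, rfl⟩)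
  have hboundary {x x' : ℤ → A} (hx : x ∈ S) (hx' : x' ∈ S) (hxx' : φ x = φ x') :=
    map_mem_unstableBoundary hS hStrans hcont hφ hfin hsmallS hexp hε hx hx' hxx'
  have h0 (x : ℤ → A) : (shiftE A ^ j) x 0 = x j := by rw [shiftE_zpow_apply, zero_add]
  have h1 : (shiftE A ^ j) t 1 = (shiftE A ^ j) t' 1 := by
    simpa only [shiftE_zpow_apply] using (add_comm 1 j) ▸ hj1
  have hbdry := hboundary (hσ t ht j) (hσ t' ht' j) heqj (by simpa only [h0] using hj) h1
  have hbdry_symm := hboundary (hσ t' ht' j) (hσ t ht j) heqj.symm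
    (by simpa only [h0] using hj.symm) h1.symm
  simp only [h0, ← hR] at hbdry hbdry_symm
  exact ⟨by rwa [← heqj], hbdry_symm⟩

/-- For a finite-to-one factor map `φ` from a transitive one-step SFT to a
transitive Smale space with a Markov family of rectangles as cylinder images, if
`φ(t) = φ(t')` with `t` in the stable set of `t'` (and `t ≠ t'`), then for some `j` the
point `φ(σʲ t')` lies in the unstable `t_j`-boundary of `R_{t'_j}` and in the unstable
`t'_j`-boundary of `R_{t_j}`. -/
theorem stmt16 {Y : Type*} [MetricSpace Y] [CompactSpace Y] (f : Equiv.Perm Y)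
    (hY : IsSmale f) (hYt : TopTransitive f)
    (c : ℝ) (hc : 0 < c) (hexp : Expansive f c)
    (ε : ℝ) (hε0 : 0 < ε) (hε : ε < c / 2)
    (N : ℕ) (T : Fin N → Fin N → Prop) (S : Set (ℤ → Fin N))
    (hS : IsOneStepSFTFor T S) (hStrans : SubshiftTransitive S)
    (φ : (ℤ → Fin N) → Y) (hφ : IsSubshiftFactorMap S f φ)
    (hfin : ∀ y : Y, (φ ⁻¹' {y} ∩ S).Finite)
    (R : Fin N → Set Y) (hR : ∀ j : Fin N, R j = φ '' {s ∈ S | s 0 = j})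
    (hrect : ∀ j : Fin N, IsRectangle f ε (R j) ∧ Metric.diam (R j) < ε)
    (hMarkov : ∀ a b : Fin N, T a b → ∀ y ∈ R a, f y ∈ R b →
      (∀ z ∈ Ws f ε y ∩ R a, f z ∈ Ws f ε (f y) ∩ R b) ∧
      (∀ z ∈ Wu f ε (f y) ∩ R b, f.symm z ∈ Wu f ε y ∩ R a))
    (t t' : ℤ → Fin N) (ht : t ∈ S) (ht' : t' ∈ S)
    (heq : φ t = φ t') (hst : t ∈ shiftStable S t') (htne : t ≠ t') :
    ∃ j : ℤ, φ (((shiftE (Fin N)) ^ j) t') ∈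
      UnstableBoundary f ε (R (t' j)) (R (t j)) ∩
      UnstableBoundary f ε (R (t j)) (R (t' j)) := by
  obtain ⟨j, hj, hj1⟩ := exists_ne_and_eq_add_one_of_mem_shiftStable hst htne
  exact ⟨j, stmt16_general f c hexp ε hε.le T S hS hStrans φ hφ.1 hφ.2.2 hfin R hR
    (fun i _ hx _ hy => (Metric.dist_le_diam_of_mem Metric.isBounded_of_compactSpace hx hy).trans_lt
      (hrect i).2) t t' ht ht' heq j hj hj1⟩
end
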